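/- Let U_q(𝔭_J) be the parabolic quantum group associated to a subset J ⊆ I. Then the multiplication map induces an isomorphism of vector spaces U_q^-(𝔭_J) ⊗ U_q^0(𝔭_J) ⊗ U_q^+(𝔭_J) ≅ U_q(𝔭_J), where U_q^+(𝔭_J), U_q^0(𝔭_J), U_q^-(𝔭_J) are the subalgebras generated by {e_j : j ∈ J}, {q^h : h ∈ P^∨}, {f_i : i ∈ I} respectively, and the canonical homomorphism U_q(𝔭_J) → U_q(𝔤) is injective. -/

import Mathlib

noncomputable section

open scoped TensorProduct

/-- The field `ℚ(q)` of rational functions. -/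
abbrev KK : Type := RatFunc ℚ

/-- The indeterminate `q ∈ ℚ(q)`. -/
def qq : KK := RatFunc.X

/-- `q^m` for `m ∈ ℤ`. -/
def qpow (m : ℤ) : KK := qq ^ m

/-- The quantum integer `[n]_i = (q_i^n - q_i^{-n})/(q_i - q_i^{-1})` where `q_i = q^d`. -/
def qint (d n : ℤ) : KK := (qpow (d * n) - qpow (-(d * n))) / (qpow d - qpow (-d))

/-- The quantum factorial `[n]_i!`. -/
def qfact (d : ℤ) : ℕ → KK
  | 0 => 1
  | n + 1 => qfact d n * qint d (n + 1)

/-- A symmetrizable generalized Cartan matrix `a` with symmetrizers `d i`, so that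
`(α_i, α_j) = d i * a i j`. -/
structure CartanData (I : Type) : Type where
  a : I → I → ℤ
  d : I → ℤ
  d_pos : ∀ i, 0 < d i
  a_diag : ∀ i, a i i = 2
  a_offdiag : ∀ i j, i ≠ j → a i j ≤ 0
  symm : ∀ i j, d i * a i j = d j * a j i

/-- Generators of the quantum group `U_q(𝔤)` (adjoint form: `t i = q^{(α_i,α_i)/2 · h_i}`). -/
inductive QGen (I : Type) : Type
  | e : I → QGen I
  | f : I → QGen I
  | t : I → QGen I
  | tinv : I → QGen I

variable {I : Type}

/-- The free algebra on the generators of `U_q(𝔤)`. -/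
abbrev FA (I : Type) : Type := FreeAlgebra KK (QGen I)

def ge (i : I) : FA I := FreeAlgebra.ι KK (QGen.e i)
def gf (i : I) : FA I := FreeAlgebra.ι KK (QGen.f i)
def gT (i : I) : FA I := FreeAlgebra.ι KK (QGen.t i)
def gTinv (i : I) : FA I := FreeAlgebra.ι KK (QGen.tinv i)

/-- Divided power `e_i^{(s)}` in the free algebra. -/
def edp (C : CartanData I) (i : I) (s : ℕ) : FA I := (qfact (C.d i) s)⁻¹ • ge i ^ s

/-- Divided power `f_i^{(s)}` in the free algebra. -/
def fdp (C : CartanData I) (i : I) (s : ℕ) : FA I := (qfact (C.d i) s)⁻¹ • gf i ^ s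

/-- The quantum Serre element `Σ_{s} (-1)^s e_i^{(s)} e_j e_i^{(1-a_{ij}-s)}`. -/
def serreE (C : CartanData I) (i j : I) : FA I :=
  ∑ s ∈ Finset.range ((1 - C.a i j).toNat + 1),
    ((-1 : KK) ^ s) • (edp C i s * ge j * edp C i ((1 - C.a i j).toNat - s))

/-- The quantum Serre element `Σ_{s} (-1)^s f_i^{(s)} f_j f_i^{(1-a_{ij}-s)}`. -/
def serreF (C : CartanData I) (i j : I) : FA I :=
  ∑ s ∈ Finset.range ((1 - C.a i j).toNat + 1),
    ((-1 : KK) ^ s) • (fdp C i s * gf j * fdp C i ((1 - C.a i j).toNat - s))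

/-- The defining relations of the quantum group `U_q(𝔤)`. -/
inductive QRel [DecidableEq I] (C : CartanData I) : FA I → FA I → Prop
  | t_tinv (i : I) : QRel C (gT i * gTinv i) 1
  | tinv_t (i : I) : QRel C (gTinv i * gT i) 1
  | t_t (i j : I) : QRel C (gT i * gT j) (gT j * gT i)
  | t_tinv_comm (i j : I) : QRel C (gT i * gTinv j) (gTinv j * gT i)
  | t_e (i j : I) : QRel C (gT i * ge j) (qpow (C.d i * C.a i j) • (ge j * gT i))
  | t_f (i j : I) : QRel C (gT i * gf j) (qpow (-(C.d i * C.a i j)) • (gf j * gT i))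
  | e_f (i j : I) :
      QRel C (ge i * gf j - gf j * ge i)
        (if i = j then (qpow (C.d i) - qpow (-C.d i))⁻¹ • (gT i - gTinv i) else 0)
  | serre_e (i j : I) : i ≠ j → QRel C (serreE C i j) 0
  | serre_f (i j : I) : i ≠ j → QRel C (serreF C i j) 0

/-- The quantum group `U_q(𝔤)`, presented by generators and relations. -/
abbrev Uq [DecidableEq I] (C : CartanData I) : Type := RingQuot (QRel C)

variable [DecidableEq I]

/-- The canonical map from the free algebra onto `U_q(𝔤)`. -/
def uMk (C : CartanData I) : FA I →ₐ[KK] Uq C := RingQuot.mkAlgHom KK (QRel C)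

def uE (C : CartanData I) (i : I) : Uq C := uMk C (ge i)
def uF (C : CartanData I) (i : I) : Uq C := uMk C (gf i)
def uT (C : CartanData I) (i : I) : Uq C := uMk C (gT i)
def uTinv (C : CartanData I) (i : I) : Uq C := uMk C (gTinv i)

/-- Divided power `e_i^{(s)} ∈ U_q(𝔤)`. -/
def uEdp (C : CartanData I) (i : I) (s : ℕ) : Uq C := (qfact (C.d i) s)⁻¹ • uE C i ^ s

/-- Divided power `f_i^{(s)} ∈ U_q(𝔤)`. -/
def uFdp (C : CartanData I) (i : I) (s : ℕ) : Uq C := (qfact (C.d i) s)⁻¹ • uF C i ^ s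

/-- The negative half `U_q^-(𝔤)`, the subalgebra generated by the `f_i`. -/
def Uneg (C : CartanData I) : Subalgebra KK (Uq C) :=
  Algebra.adjoin KK (Set.range (uF C))

/-- The weight `-β` component of `U_q^-(𝔤)` (spanned by monomials in the `f_i` of
content `β ∈ Q_+`). -/
def negWt (C : CartanData I) (β : I →₀ ℕ) : Submodule KK (Uq C) :=
  Submodule.span KK
    {u | ∃ w : List I, (∀ j, w.count j = β j) ∧ u = (w.map (uF C)).prod}

/-- The pairing `(α_i, β) = Σ_j β_j (α_i, α_j)` for `β ∈ Q_+`. -/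
def pairB (C : CartanData I) (i : I) (β : I →₀ ℕ) : ℤ :=
  β.sum fun j m => C.d i * C.a i j * (m : ℤ)

/-- `f_j` as an element of the subalgebra `U_q^-(𝔤)`. -/
def uFneg (C : CartanData I) (j : I) : ↥(Uneg C) :=
  ⟨uF C j, Algebra.subset_adjoin ⟨j, rfl⟩⟩

/-- `t_i^m` for `m ∈ ℤ`. -/
def tpow (C : CartanData I) (i : I) (m : ℤ) : Uq C :=
  if 0 ≤ m then uT C i ^ m.toNat else uTinv C i ^ (-m).toNat

/-- Generators of the parabolic quantum group `U_q(𝔭_J)`: `e_j` only for `j ∈ J`. -/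
inductive QGenP (I : Type) (J : Set I) : Type
  | e : ↥J → QGenP I J
  | f : I → QGenP I J
  | t : I → QGenP I J
  | tinv : I → QGenP I J

/-- The free algebra on the generators of `U_q(𝔭_J)`. -/
abbrev FAP (I : Type) (J : Set I) : Type := FreeAlgebra KK (QGenP I J)

def pge (J : Set I) (j : ↥J) : FAP I J := FreeAlgebra.ι KK (QGenP.e j)
def pgf (J : Set I) (i : I) : FAP I J := FreeAlgebra.ι KK (QGenP.f i)
def pgT (J : Set I) (i : I) : FAP I J := FreeAlgebra.ι KK (QGenP.t i)
def pgTinv (J : Set I) (i : I) : FAP I J := FreeAlgebra.ι KK (QGenP.tinv i)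

def pedp (C : CartanData I) (J : Set I) (j : ↥J) (s : ℕ) : FAP I J :=
  (qfact (C.d j) s)⁻¹ • pge J j ^ s

def pfdp (C : CartanData I) (J : Set I) (i : I) (s : ℕ) : FAP I J :=
  (qfact (C.d i) s)⁻¹ • pgf J i ^ s

def pserreE (C : CartanData I) (J : Set I) (i j : ↥J) : FAP I J :=
  ∑ s ∈ Finset.range ((1 - C.a i j).toNat + 1),
    ((-1 : KK) ^ s) • (pedp C J i s * pge J j * pedp C J i ((1 - C.a i j).toNat - s))

def pserreF (C : CartanData I) (J : Set I) (i j : I) : FAP I J :=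
  ∑ s ∈ Finset.range ((1 - C.a i j).toNat + 1),
    ((-1 : KK) ^ s) • (pfdp C J i s * pgf J j * pfdp C J i ((1 - C.a i j).toNat - s))

/-- The defining relations of the parabolic quantum group `U_q(𝔭_J)`. -/
inductive QRelP [DecidableEq I] (C : CartanData I) (J : Set I) : FAP I J → FAP I J → Prop
  | t_tinv (i : I) : QRelP C J (pgT J i * pgTinv J i) 1
  | tinv_t (i : I) : QRelP C J (pgTinv J i * pgT J i) 1
  | t_t (i j : I) : QRelP C J (pgT J i * pgT J j) (pgT J j * pgT J i)
  | t_tinv_comm (i j : I) : QRelP C J (pgT J i * pgTinv J j) (pgTinv J j * pgT J i)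
  | t_e (i : I) (j : ↥J) :
      QRelP C J (pgT J i * pge J j) (qpow (C.d i * C.a i j) • (pge J j * pgT J i))
  | t_f (i j : I) :
      QRelP C J (pgT J i * pgf J j) (qpow (-(C.d i * C.a i j)) • (pgf J j * pgT J i))
  | e_f (i : ↥J) (j : I) :
      QRelP C J (pge J i * pgf J j - pgf J j * pge J i)
        (if (i : I) = j then
            (qpow (C.d i) - qpow (-C.d (i : I)))⁻¹ • (pgT J i - pgTinv J i)
          else 0)
  | serre_e (i j : ↥J) : (i : I) ≠ (j : I) → QRelP C J (pserreE C J i j) 0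
  | serre_f (i j : I) : i ≠ j → QRelP C J (pserreF C J i j) 0

/-- The parabolic quantum group `U_q(𝔭_J)`, presented by generators and relations. -/
abbrev UqP [DecidableEq I] (C : CartanData I) (J : Set I) : Type := RingQuot (QRelP C J)

def pMk (C : CartanData I) (J : Set I) : FAP I J →ₐ[KK] UqP C J :=
  RingQuot.mkAlgHom KK (QRelP C J)

def pE (C : CartanData I) (J : Set I) (j : ↥J) : UqP C J := pMk C J (pge J j)
def pF (C : CartanData I) (J : Set I) (i : I) : UqP C J := pMk C J (pgf J i)
def pT (C : CartanData I) (J : Set I) (i : I) : UqP C J := pMk C J (pgT J i)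
def pTinv (C : CartanData I) (J : Set I) (i : I) : UqP C J := pMk C J (pgTinv J i)

/-- `U_q^-(𝔭_J)`, the subalgebra of `U_q(𝔭_J)` generated by the `f_i`, `i ∈ I`. -/
def Pneg (C : CartanData I) (J : Set I) : Subalgebra KK (UqP C J) :=
  Algebra.adjoin KK (Set.range (pF C J))

/-- `U_q^0(𝔭_J)`, the subalgebra of `U_q(𝔭_J)` generated by the `q^h`. -/
def Pzero (C : CartanData I) (J : Set I) : Subalgebra KK (UqP C J) :=
  Algebra.adjoin KK (Set.range (pT C J) ∪ Set.range (pTinv C J))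

/-- `U_q^+(𝔭_J)`, the subalgebra of `U_q(𝔭_J)` generated by the `e_j`, `j ∈ J`. -/
def Ppos (C : CartanData I) (J : Set I) : Subalgebra KK (UqP C J) :=
  Algebra.adjoin KK (Set.range (pE C J))

/-- The multiplication map `U_q^-(𝔭_J) ⊗ U_q^0(𝔭_J) ⊗ U_q^+(𝔭_J) → U_q(𝔭_J)`,
`x ⊗ y ⊗ z ↦ xyz`. -/
def triMul (C : CartanData I) (J : Set I) :
    (↥(Pneg C J) ⊗[KK] ↥(Pzero C J)) ⊗[KK] ↥(Ppos C J) →ₗ[KK] UqP C J :=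
  (LinearMap.mul' KK (UqP C J)).comp
    (TensorProduct.map
      ((LinearMap.mul' KK (UqP C J)).comp
        (TensorProduct.map (Pneg C J).val.toLinearMap (Pzero C J).val.toLinearMap))
      (Ppos C J).val.toLinearMap)

/-!
`U_q(𝔤)` acts on the module `U⁻ ⊗ (U⁰ ⊗ U⁺_J)` induced from the representation of its Borel part
on `U⁰ ⊗ U⁺_J` in which `e_i` acts by zero for `i ∉ J`. On an induced module `e_i` must act on
`U⁻` by a derivation taking `f_k` to `δ_{ik} (t_i - t_i⁻¹) / (q_i - q_i⁻¹)`; it exists because the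
quantum Serre relations hold to first order along this deformation of the `f_k`, and for the same
reason the operators `e_i` satisfy the Serre relations on the induced module. A product `x t y` in
`U_q(𝔭_J)` maps the vacuum `1 ⊗ 1 ⊗ 1` to `x ⊗ t ⊗ y`, so the multiplication map is injective even
after passing to `U_q(𝔤)`. It is surjective because its image contains `1` and is stable under
left multiplication by the generators, and the two facts together make `U_q(𝔭_J) → U_q(𝔤)`
injective.
-/

theorem qpow_zero : qpow 0 = 1 :=
  zpow_zero _

theorem qpow_add (m n : ℤ) : qpow (m + n) = qpow m * qpow n :=
  zpow_add₀ RatFunc.X_ne_zero m n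

theorem qpow_ne_zero (m : ℤ) : qpow m ≠ 0 :=
  zpow_ne_zero m RatFunc.X_ne_zero

theorem qpow_injective : Function.Injective qpow := fun m n h => by
  classical
  simpa [qpow, qq, RatFunc.inftyValuation.X_zpow] using congrArg (RatFunc.inftyValuation ℚ) h

theorem qpow_sub_qpow_neg_ne_zero {m : ℤ} (hm : m ≠ 0) : qpow m - qpow (-m) ≠ 0 :=
  sub_ne_zero.2 (qpow_injective.ne (by omega))

theorem qint_zero_right (d : ℤ) : qint d 0 = 0 := by
  simp [qint]

theorem qint_ne_zero {d n : ℤ} (hd : d ≠ 0) (hn : n ≠ 0) : qint d n ≠ 0 :=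
  div_ne_zero (qpow_sub_qpow_neg_ne_zero (mul_ne_zero hd hn)) (qpow_sub_qpow_neg_ne_zero hd)

theorem qint_neg_left (d n : ℤ) : qint (-d) n = qint d n := by
  simp only [qint, neg_mul, neg_neg, ← neg_div_neg_eq (qpow (d * n) - _), neg_sub]

theorem qint_add_right (d r s : ℤ) :
    qint d (r + s) = qpow (-(d * s)) * qint d r + qpow (d * r) * qint d s := by
  simp only [qint, mul_div_assoc', ← add_div, mul_sub, ← qpow_add]
  ring_nf

theorem qfact_ne_zero {d : ℤ} (hd : d ≠ 0) : ∀ n : ℕ, qfact d n ≠ 0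
  | 0 => one_ne_zero
  | n + 1 => mul_ne_zero (qfact_ne_zero hd n) (qint_ne_zero hd (by omega))

theorem qfact_neg_left (d : ℤ) : ∀ n : ℕ, qfact (-d) n = qfact d n
  | 0 => rfl
  | n + 1 => by rw [qfact, qfact, qfact_neg_left d n, qint_neg_left]

/-- The unit `q^m` of `ℚ(q)`. -/
def qpowUnit (m : ℤ) : KKˣ :=
  Units.mk0 (qpow m) (qpow_ne_zero m)

section Serre

open Finset.HasAntidiagonal (antidiagonal mem_antidiagonal)

variable {R S : Type*} [Ring R] [Algebra KK R] [Ring S] [Algebra KK S]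

/-- The divided power `x^{(n)} = x^n / [n]_d!`. -/
def dividedPow (d : ℤ) (x : R) (n : ℕ) : R :=
  (qfact d n)⁻¹ • x ^ n

/-- The quantum Serre element `Σ_s (-1)^s x^{(s)} y x^{(1-a-s)}`, with divided powers taken at
`q^d`. -/
def serre (d a : ℤ) (x y : R) : R :=
  ∑ s ∈ Finset.range ((1 - a).toNat + 1),
    (-1 : KK) ^ s • (dividedPow d x s * y * dividedPow d x ((1 - a).toNat - s))

theorem map_dividedPow (g : R →ₐ[KK] S) (d : ℤ) (x : R) (n : ℕ) :
    g (dividedPow d x n) = dividedPow d (g x) n := by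
  simp only [dividedPow, map_smul, map_pow]

theorem map_serre (g : R →ₐ[KK] S) (d a : ℤ) (x y : R) :
    g (serre d a x y) = serre d a (g x) (g y) := by
  simp only [serre, map_sum, map_smul, map_mul, map_dividedPow]

theorem serre_neg_left (d a : ℤ) (x y : R) : serre (-d) a x y = serre d a x y := by
  simp only [serre, dividedPow, qfact_neg_left]

theorem serre_zero_left {a : ℤ} (ha : a ≤ 0) (d : ℤ) (y : R) : serre d a 0 y = 0 := by
  refine Finset.sum_eq_zero fun s _ => ?_
  rcases eq_or_ne s 0 with rfl | hs
  · simp [dividedPow, show (1 - a).toNat ≠ 0 by omega]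
  · simp [dividedPow, hs]

theorem serre_zero_right (d a : ℤ) (x : R) : serre d a x 0 = 0 := by
  simp [serre]

theorem serre_mul (d a : ℤ) {p x p' y : R} (hpp : Commute p p') (hpx : Commute p x)
    (hpy : Commute p y) (hxp : Commute x p') :
    serre d a (p * x) (p' * y) = p ^ (1 - a).toNat * p' * serre d a x y := by
  simp only [serre, Finset.mul_sum]
  refine Finset.sum_congr rfl fun s hs => ?_
  obtain ⟨r, hr⟩ := Nat.exists_eq_add_of_le (Nat.lt_succ_iff.1 (Finset.mem_range.1 hs))
  rw [hr, Nat.add_sub_cancel_left]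
  simp only [dividedPow, mul_smul_comm, smul_mul_assoc, hpx.mul_pow, pow_add]
  congr 3
  calc p ^ s * x ^ s * (p' * y) * (p ^ r * x ^ r)
      = p ^ s * (x ^ s * p') * (y * p ^ r) * x ^ r := by noncomm_ring
    _ = p ^ s * p' * (x ^ s * p ^ r) * y * x ^ r := by
        rw [(hxp.pow_left s).eq, (hpy.symm.pow_right r).eq]; noncomm_ring
    _ = p ^ s * (p' * p ^ r) * x ^ s * y * x ^ r := by
        rw [(hpx.symm.pow_pow s r).eq]; noncomm_ring
    _ = p ^ s * p ^ r * p' * (x ^ s * y * x ^ r) := by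
        rw [(hpp.symm.pow_right r).eq]; noncomm_ring

/-- The iterated `q`-commutator: `y ↦ x y - q^{d(a+2m)} y x` applied for `m = 0, 1, …`. -/
def qAd (d a : ℤ) (x y : R) : ℕ → R
  | 0 => y
  | m + 1 => x * qAd d a x y m - qpow (d * (a + 2 * m)) • (qAd d a x y m * x)

/-- The expansion of `qAd d a x y m / [m]_d!` in monomials; see `qAd_eq_smul_dividedQAd`. -/
def dividedQAd (d a : ℤ) (x y : R) (m : ℕ) : R :=
  ∑ p ∈ antidiagonal m, ((-1) ^ p.2 * qpow (d * (p.2 * (a + m - 1)))) •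
    (dividedPow d x p.1 * y * dividedPow d x p.2)

theorem mul_dividedPow {d : ℤ} (hd : d ≠ 0) (x : R) (n : ℕ) :
    x * dividedPow d x n = qint d (n + 1) • dividedPow d x (n + 1) := by
  have h : qint d (n + 1) ≠ 0 := qint_ne_zero hd (by omega)
  rw [dividedPow, dividedPow, qfact, mul_inv_rev, smul_smul, mul_inv_cancel_left₀ h,
    mul_smul_comm, pow_succ']

theorem dividedPow_mul {d : ℤ} (hd : d ≠ 0) (x : R) (n : ℕ) :
    dividedPow d x n * x = qint d (n + 1) • dividedPow d x (n + 1) := by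
  rw [← mul_dividedPow hd, dividedPow, smul_mul_assoc, mul_smul_comm, pow_mul_comm']

theorem mul_dividedQAd {d : ℤ} (hd : d ≠ 0) (a : ℤ) (x y : R) (m : ℕ) :
    x * dividedQAd d a x y m = ∑ p ∈ antidiagonal (m + 1),
      ((-1) ^ p.2 * qpow (d * (p.2 * (a + m - 1))) * qint d p.1) •
        (dividedPow d x p.1 * y * dividedPow d x p.2) := by
  rw [Finset.Nat.sum_antidiagonal_succ, Nat.cast_zero, qint_zero_right, mul_zero, zero_smul,
    zero_add, dividedQAd, Finset.mul_sum]
  refine Finset.sum_congr rfl fun p _ => ?_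
  rw [mul_smul_comm, ← mul_assoc x, ← mul_assoc x, mul_dividedPow hd, smul_mul_assoc,
    smul_mul_assoc, smul_smul, Nat.cast_add_one]

theorem smul_dividedQAd_mul {d : ℤ} (hd : d ≠ 0) (a : ℤ) (x y : R) (m : ℕ) :
    qpow (d * (a + 2 * m)) • (dividedQAd d a x y m * x) = -∑ p ∈ antidiagonal (m + 1),
      ((-1) ^ p.2 * qpow (d * (p.2 * (a + m) + p.1)) * qint d p.2) •
        (dividedPow d x p.1 * y * dividedPow d x p.2) := by
  rw [Finset.Nat.sum_antidiagonal_succ', Nat.cast_zero, qint_zero_right, mul_zero, zero_smul,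
    zero_add, dividedQAd, Finset.sum_mul, Finset.smul_sum, ← Finset.sum_neg_distrib]
  refine Finset.sum_congr rfl fun p hp => ?_
  have hm : (m : ℤ) = p.1 + p.2 := mod_cast (mem_antidiagonal.1 hp).symm
  have hq : qpow (d * ((p.2 + 1 : ℕ) * (a + m) + p.1)) =
      qpow (d * (a + 2 * m)) * qpow (d * (p.2 * (a + m - 1))) := by
    rw [← qpow_add, hm]; congr 1; push_cast; ring
  rw [smul_mul_assoc, mul_assoc (_ * y), dividedPow_mul hd, mul_smul_comm, smul_smul, smul_smul,
    ← neg_smul, hq, Nat.cast_add_one]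
  congr 1
  ring

theorem qint_smul_dividedQAd_succ {d : ℤ} (hd : d ≠ 0) (a : ℤ) (x y : R) (m : ℕ) :
    qint d (m + 1) • dividedQAd d a x y (m + 1) =
      x * dividedQAd d a x y m - qpow (d * (a + 2 * m)) • (dividedQAd d a x y m * x) := by
  rw [mul_dividedQAd hd, smul_dividedQAd_mul hd, sub_neg_eq_add, ← Finset.sum_add_distrib,
    dividedQAd, Finset.smul_sum]
  refine Finset.sum_congr rfl fun p hp => ?_
  have hm : ((m : ℤ) + 1) = p.1 + p.2 := mod_cast (mem_antidiagonal.1 hp).symm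
  have hq₁ : qpow (d * (p.2 * (a + m - 1))) =
      qpow (d * (p.2 * (a + (m + 1 : ℕ) - 1))) * qpow (-(d * p.2)) := by
    rw [← qpow_add]; congr 1; push_cast; ring
  have hq₂ : qpow (d * (p.2 * (a + m) + p.1)) =
      qpow (d * (p.2 * (a + (m + 1 : ℕ) - 1))) * qpow (d * p.1) := by
    rw [← qpow_add]; congr 1; push_cast; ring
  rw [smul_smul, ← add_smul, hm, qint_add_right, hq₁, hq₂]
  congr 1
  ring

theorem qAd_eq_smul_dividedQAd {d : ℤ} (hd : d ≠ 0) (a : ℤ) (x y : R) (m : ℕ) :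
    qAd d a x y m = qfact d m • dividedQAd d a x y m := by
  induction m with
  | zero => simp [qAd, dividedQAd, qfact, dividedPow, qpow_zero]
  | succ m ih =>
    rw [qAd, ih, qfact, mul_smul, qint_smul_dividedQAd_succ hd, smul_sub, mul_smul_comm,
      smul_mul_assoc, smul_comm (qfact d m) (qpow _)]

theorem serre_eq_smul_qAd {d a : ℤ} (hd : d ≠ 0) (ha : a ≤ 0) (x y : R) :
    serre d a x y = ((-1) ^ (1 - a).toNat * (qfact d (1 - a).toNat)⁻¹) •
      qAd d a x y (1 - a).toNat := by
  obtain ⟨n, hn⟩ := Int.eq_ofNat_of_zero_le (show 0 ≤ 1 - a by omega)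
  rw [qAd_eq_smul_dividedQAd hd, smul_smul, inv_mul_cancel_right₀ (qfact_ne_zero hd _),
    dividedQAd, Finset.smul_sum, serre, ← Finset.Nat.sum_antidiagonal_eq_sum_range_succ
      fun s r => (-1 : KK) ^ s • (dividedPow d x s * y * dividedPow d x r), hn, Int.toNat_natCast]
  refine Finset.sum_congr rfl fun p hp => ?_
  have hsign : (-1 : KK) ^ n * (-1) ^ p.2 = (-1) ^ p.1 := by
    rw [← mem_antidiagonal.1 hp, pow_add, mul_assoc, ← mul_pow]
    simp
  rw [show d * (p.2 * (a + n - 1)) = 0 by rw [← hn]; ring, qpow_zero, mul_one, smul_smul, hsign]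

end Serre

section SerreDeriv

open TrivSqZeroExt

variable {R : Type*} [Ring R] [Algebra KK R]

theorem map_qAd {S : Type*} [Ring S] [Algebra KK S] (g : R →ₐ[KK] S) (d a : ℤ) (x y : R) (m : ℕ) :
    g (qAd d a x y m) = qAd d a (g x) (g y) m := by
  induction m with
  | zero => rfl
  | succ m ih => rw [qAd, map_sub, map_smul, map_mul, map_mul, ih, qAd]

theorem fst_qAd (d a : ℤ) (x y : DualNumber R) (m : ℕ) :
    (qAd d a x y m).fst = qAd d a x.fst y.fst m :=
  map_qAd (fstHom KK R R) d a x y m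

theorem snd_qAd_succ (d a : ℤ) (x y : DualNumber R) (m : ℕ) :
    (qAd d a x y (m + 1)).snd =
      (x.fst * (qAd d a x y m).snd + x.snd * qAd d a x.fst y.fst m) -
        qpow (d * (a + 2 * m)) •
          (qAd d a x.fst y.fst m * x.snd + (qAd d a x y m).snd * x.fst) := by
  simp only [qAd, snd_sub, snd_smul, snd_mul, fst_qAd, smul_eq_mul, op_smul_eq_mul]

/-- The first-order variation of the Serre element `serre d a x y` when `x` and `y` vary in the
directions `x'` and `y'`, computed with dual numbers. -/
def serreDeriv (d a : ℤ) (x y x' y' : R) : R :=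
  (serre d a (inl x + inr x' : DualNumber R) (inl y + inr y')).snd

theorem serreDeriv_neg_left (d a : ℤ) (x y x' y' : R) :
    serreDeriv (-d) a x y x' y' = serreDeriv d a x y x' y' := by
  rw [serreDeriv, serre_neg_left, serreDeriv]

theorem serreDeriv_zero_zero (d a : ℤ) (x y : R) : serreDeriv d a x y 0 0 = 0 := by
  have h := map_serre (inlAlgHom KK R R) d a x y
  simp only [inlAlgHom_apply] at h
  rw [serreDeriv, inr_zero, add_zero, add_zero, ← h, snd_inl]

theorem serreDeriv_eq_smul {d a : ℤ} (hd : d ≠ 0) (ha : a ≤ 0) (x y x' y' : R) :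
    serreDeriv d a x y x' y' = ((-1) ^ (1 - a).toNat * (qfact d (1 - a).toNat)⁻¹) •
      (qAd d a (inl x + inr x' : DualNumber R) (inl y + inr y') (1 - a).toNat).snd := by
  rw [serreDeriv, serre_eq_smul_qAd hd ha, snd_smul]

theorem serreDeriv_add {d a : ℤ} (hd : d ≠ 0) (ha : a ≤ 0) (x y x₁ x₂ y₁ y₂ : R) :
    serreDeriv d a x y (x₁ + x₂) (y₁ + y₂) =
      serreDeriv d a x y x₁ y₁ + serreDeriv d a x y x₂ y₂ := by
  have key (m : ℕ) :
      (qAd d a (inl x + inr (x₁ + x₂) : DualNumber R) (inl y + inr (y₁ + y₂)) m).snd =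
      (qAd d a (inl x + inr x₁ : DualNumber R) (inl y + inr y₁) m).snd +
        (qAd d a (inl x + inr x₂ : DualNumber R) (inl y + inr y₂) m).snd := by
    induction m with
    | zero => simp [qAd]
    | succ m ih =>
      simp only [snd_qAd_succ, ih, fst_add, fst_inl, fst_inr, snd_add, snd_inl, snd_inr, add_zero,
        zero_add, mul_add, add_mul, smul_add]
      abel
  simp only [serreDeriv_eq_smul hd ha, key, smul_add]

theorem mul_qAd_of_qCommute {d a : ℤ} {x y t : R} (hx : t * x = qpow (2 * d) • (x * t))
    (hy : t * y = qpow (d * a) • (y * t)) (m : ℕ) :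
    t * qAd d a x y m = qpow (d * (a + 2 * m)) • (qAd d a x y m * t) := by
  induction m with
  | zero => simpa [qAd] using hy
  | succ m ih =>
    have hq : qpow (d * (a + 2 * (m + 1 : ℕ))) = qpow (2 * d) * qpow (d * (a + 2 * m)) := by
      rw [← qpow_add]; congr 1; push_cast; ring
    rw [qAd, hq, mul_smul, mul_sub, mul_smul_comm, ← mul_assoc, hx, smul_mul_assoc, mul_assoc,
      ih, ← mul_assoc t, ih, smul_mul_assoc, mul_assoc _ t, hx]
    simp only [mul_smul_comm, smul_mul_assoc, sub_mul, smul_sub, mul_assoc, smul_smul]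
    ring_nf

theorem serreDeriv_left_eq_zero {d a : ℤ} (hd : d ≠ 0) (ha : a ≤ 0) {x y t : R}
    (hx : t * x = qpow (2 * d) • (x * t)) (hy : t * y = qpow (d * a) • (y * t)) :
    serreDeriv d a x y t 0 = 0 := by
  have key (m : ℕ) : (qAd d a (inl x + inr t : DualNumber R) (inl y + inr 0) m).snd = 0 := by
    induction m with
    | zero => simp [qAd]
    | succ m ih =>
      rw [snd_qAd_succ, ih]
      simp [mul_qAd_of_qCommute hx hy]
  rw [serreDeriv_eq_smul hd ha, key, smul_zero]

theorem serreDeriv_right_eq_zero {d a : ℤ} (hd : d ≠ 0) (ha : a ≤ 0) {x t : R} (y : R)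
    (hx : t * x = qpow (-(d * a)) • (x * t)) : serreDeriv d a x y 0 t = 0 := by
  have key (m : ℕ) : (qAd d a (inl x + inr 0 : DualNumber R) (inl y + inr t) (m + 1)).snd = 0 := by
    induction m with
    | zero => simp [qAd, hx, smul_smul, ← qpow_add, qpow_zero]
    | succ m ih =>
      rw [snd_qAd_succ, ih]
      simp
  obtain ⟨n, hn⟩ := Nat.exists_eq_succ_of_ne_zero (show (1 - a).toNat ≠ 0 by omega)
  rw [serreDeriv_eq_smul hd ha, hn, key, smul_zero]

theorem serreDeriv_add_left_eq_zero {d a : ℤ} (hd : d ≠ 0) (ha : a ≤ 0) {x y t t' : R}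
    (hx : t * x = qpow (2 * d) • (x * t)) (hy : t * y = qpow (d * a) • (y * t))
    (hx' : t' * x = qpow (-(2 * d)) • (x * t')) (hy' : t' * y = qpow (-(d * a)) • (y * t')) :
    serreDeriv d a x y (t + t') 0 = 0 := by
  have h : serreDeriv (-d) a x y t' 0 = 0 :=
    serreDeriv_left_eq_zero (neg_ne_zero.2 hd) ha (by rwa [mul_neg]) (by rwa [neg_mul])
  rw [← add_zero (0 : R), serreDeriv_add hd ha, serreDeriv_left_eq_zero hd ha hx hy,
    ← serreDeriv_neg_left, h, add_zero]

theorem serreDeriv_add_right_eq_zero {d a : ℤ} (hd : d ≠ 0) (ha : a ≤ 0) {x t t' : R} (y : R)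
    (hx : t * x = qpow (d * a) • (x * t)) (hx' : t' * x = qpow (-(d * a)) • (x * t')) :
    serreDeriv d a x y 0 (t + t') = 0 := by
  have h : serreDeriv (-d) a x y 0 t = 0 :=
    serreDeriv_right_eq_zero (neg_ne_zero.2 hd) ha y (by rwa [neg_mul, neg_neg])
  rw [← add_zero (0 : R), serreDeriv_add hd ha, serreDeriv_right_eq_zero hd ha y hx',
    ← serreDeriv_neg_left, h, add_zero]

/-- The homomorphism `r ↦ r + ε ⁅b, r⁆`, i.e. conjugation by `1 + ε b`. -/
def innerDeform (b : R) : R →ₐ[KK] DualNumber R where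
  toFun r := inl r + inr ⁅b, r⁆
  map_one' := by ext <;> simp [Ring.lie_def]
  map_zero' := by ext <;> simp [Ring.lie_def]
  map_mul' r s := by
    ext
    · simp
    · simp only [Ring.lie_def, snd_mul, snd_add, fst_add, fst_inl, fst_inr, snd_inl, snd_inr,
        smul_eq_mul, op_smul_eq_mul, add_zero, zero_add]
      noncomm_ring
  map_add' r s := by
    ext
    · simp
    · simp only [Ring.lie_def, snd_add, snd_inl, snd_inr, zero_add]
      noncomm_ring
  commutes' c := by
    ext <;> simp [Ring.lie_def, algebraMap_eq_inl', Algebra.commutes]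

theorem serreDeriv_lie (d a : ℤ) (b x y : R) :
    serreDeriv d a x y ⁅b, x⁆ ⁅b, y⁆ = ⁅b, serre d a x y⁆ := by
  have h := congrArg snd (map_serre (innerDeform b) d a x y)
  simpa [innerDeform, serreDeriv] using h.symm

end SerreDeriv

section SerreFamily

open TrivSqZeroExt

variable {ι : Type} (C : CartanData ι) {R S : Type*} [Ring R] [Algebra KK R] [Ring S] [Algebra KK S]

/-- A family satisfies the quantum Serre relations of the Cartan datum `C`. -/
def IsSerreFamily (x : ι → R) : Prop :=
  ∀ ⦃i j⦄, i ≠ j → serre (C.d i) (C.a i j) (x i) (x j) = 0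

/-- The Cartan datum on a subset of the index set. -/
def CartanData.restrict (J : Set ι) : CartanData J where
  a i j := C.a i j
  d i := C.d i
  d_pos i := C.d_pos i
  a_diag i := C.a_diag i
  a_offdiag i j hij := C.a_offdiag i j (Subtype.coe_ne_coe.2 hij)
  symm i j := C.symm i j

variable {C}

theorem IsSerreFamily.map {x : ι → R} (hx : IsSerreFamily C x) (g : R →ₐ[KK] S) :
    IsSerreFamily C (g ∘ x) := fun i j hij => by
  rw [Function.comp_apply, Function.comp_apply, ← map_serre, hx hij, map_zero]

theorem IsSerreFamily.codRestrict {x : ι → R} (hx : IsSerreFamily C x) (A : Subalgebra KK R)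
    (h : ∀ i, x i ∈ A) : IsSerreFamily C fun i => (⟨x i, h i⟩ : A) := fun _ _ hij =>
  Subtype.val_injective ((map_serre A.val ..).trans (hx hij))

theorem IsSerreFamily.mul {p x : ι → R} (hx : IsSerreFamily C x)
    (hpp : ∀ i j, Commute (p i) (p j)) (hpx : ∀ i j, Commute (p i) (x j)) :
    IsSerreFamily C (p * x) := fun i j hij => by
  rw [Pi.mul_apply, Pi.mul_apply,
    serre_mul _ _ (hpp i j) (hpx i i) (hpx i j) (hpx j i).symm, hx hij, mul_zero]

theorem IsSerreFamily.smul {x : ι → R} (hx : IsSerreFamily C x) (c : ι → KK) :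
    IsSerreFamily C fun i => c i • x i := by
  have h := hx.mul (p := algebraMap KK R ∘ c) (fun _ _ => Algebra.commutes _ _)
    fun _ _ => Algebra.commutes _ _
  simpa only [Algebra.smul_def, Pi.mul_def, Function.comp_apply] using h

theorem IsSerreFamily.extend {J : Set ι} {x : J → R} (hx : IsSerreFamily (C.restrict J) x) :
    IsSerreFamily C (Function.extend (↑) x 0) := fun i j hij => by
  by_cases hi : i ∈ J
  · by_cases hj : j ∈ J
    · rw [Subtype.val_injective.extend_apply x 0 ⟨i, hi⟩,
        Subtype.val_injective.extend_apply x 0 ⟨j, hj⟩]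
      exact hx (i := ⟨i, hi⟩) (j := ⟨j, hj⟩) fun h => hij (congrArg Subtype.val h)
    · rw [Function.extend_apply' (f := Subtype.val) x (0 : ι → R) j (by simpa using hj),
        Pi.zero_apply, serre_zero_right]
  · rw [Function.extend_apply' (f := Subtype.val) x (0 : ι → R) i (by simpa using hi),
      Pi.zero_apply, serre_zero_left (C.a_offdiag i j hij)]

theorem IsSerreFamily.inl_add_inr {x x' : ι → R} (hx : IsSerreFamily C x)
    (hx' : ∀ ⦃i j⦄, i ≠ j → serreDeriv (C.d i) (C.a i j) (x i) (x j) (x' i) (x' j) = 0) :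
    IsSerreFamily C fun i => (inl (x i) + inr (x' i) : DualNumber R) := fun i j hij => by
  refine TrivSqZeroExt.ext ?_ (hx' hij)
  rw [← fstHom_apply KK, map_serre]
  simpa using hx hij

variable (C) in
theorem serreDeriv_single_eq_zero [DecidableEq ι] {x : ι → R} {k : ι} {t t' : R}
    (ht : ∀ l, t * x l = qpow (C.d k * C.a k l) • (x l * t))
    (ht' : ∀ l, t' * x l = qpow (-(C.d k * C.a k l)) • (x l * t')) {i j : ι} (hij : i ≠ j) :
    serreDeriv (C.d i) (C.a i j) (x i) (x j) ((Pi.single k (t + t') : ι → R) i)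
      ((Pi.single k (t + t') : ι → R) j) = 0 := by
  have hd : C.d i ≠ 0 := (C.d_pos i).ne'
  have ha : C.a i j ≤ 0 := C.a_offdiag i j hij
  rcases eq_or_ne k i with rfl | hki
  · have hk : C.d k * C.a k k = 2 * C.d k := by rw [C.a_diag, mul_comm]
    rw [Pi.single_eq_same, Pi.single_eq_of_ne hij.symm]
    exact serreDeriv_add_left_eq_zero hd ha (hk ▸ ht k) (ht j) (hk ▸ ht' k) (ht' j)
  rcases eq_or_ne k j with rfl | hkj
  · rw [Pi.single_eq_same, Pi.single_eq_of_ne hij]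
    exact serreDeriv_add_right_eq_zero hd ha _ (C.symm i k ▸ ht i) (C.symm i k ▸ ht' i)
  · rw [Pi.single_eq_of_ne hki.symm, Pi.single_eq_of_ne hkj.symm, serreDeriv_zero_zero]

end SerreFamily

section Generic

variable {K A B : Type*} [CommSemiring K] [Semiring A] [Algebra K A] [Semiring B] [Algebra K B]

theorem exists_mul_eq_mul_of_mem_adjoin {s : Set A} {e : A}
    (he : ∀ x ∈ s, ∃ x' ∈ Algebra.adjoin K s, e * x = x' * e) {a : A}
    (ha : a ∈ Algebra.adjoin K s) : ∃ a' ∈ Algebra.adjoin K s, e * a = a' * e := by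
  induction ha using Algebra.adjoin_induction with
  | mem x hx => exact he x hx
  | algebraMap r => exact ⟨_, Subalgebra.algebraMap_mem _ r, (Algebra.commutes r e).symm⟩
  | add x y _ _ hx hy =>
    obtain ⟨x', hx', hex⟩ := hx
    obtain ⟨y', hy', hey⟩ := hy
    exact ⟨x' + y', add_mem hx' hy', by rw [mul_add, add_mul, hex, hey]⟩
  | mul x y _ _ hx hy =>
    obtain ⟨x', hx', hex⟩ := hx
    obtain ⟨y', hy', hey⟩ := hy
    exact ⟨x' * y', mul_mem hx' hy', by rw [← mul_assoc, hex, mul_assoc, hey, mul_assoc]⟩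

theorem smul_mem_of_mem_adjoin {M : Type*} [AddCommMonoid M] [Module K M] [Module A M]
    [IsScalarTower K A M] {N : Submodule K M} {s : Set A} (h : ∀ x ∈ s, ∀ v ∈ N, x • v ∈ N) {a : A}
    (ha : a ∈ Algebra.adjoin K s) {v : M} (hv : v ∈ N) : a • v ∈ N := by
  induction ha using Algebra.adjoin_induction generalizing v with
  | mem x hx => exact h x hx v hv
  | algebraMap r => rw [algebraMap_smul]; exact N.smul_mem r hv
  | add x y _ _ hx hy => rw [add_smul]; exact add_mem (hx hv) (hy hv)
  | mul x y _ _ hx hy => rw [mul_smul]; exact hx (hy hv)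

theorem comp_eq_comp_of_adjoin_eq_top {V W : Type*} [AddCommMonoid V] [Module K V]
    [AddCommMonoid W] [Module K W] {s : Set A} (hs : Algebra.adjoin K s = ⊤)
    (f : A →ₐ[K] Module.End K V) (g : A →ₐ[K] Module.End K W) {p : W →ₗ[K] V}
    (h : ∀ x ∈ s, f x ∘ₗ p = p ∘ₗ g x) (a : A) : f a ∘ₗ p = p ∘ₗ g a := by
  have ha : a ∈ Algebra.adjoin K s := hs ▸ Algebra.mem_top
  induction ha using Algebra.adjoin_induction with
  | mem x hx => exact h x hx
  | algebraMap r => ext; simp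
  | add x y _ _ hx hy => rw [map_add, map_add, LinearMap.add_comp, LinearMap.comp_add, hx, hy]
  | mul x y _ _ hx hy =>
    rw [map_mul, map_mul, Module.End.mul_eq_comp, Module.End.mul_eq_comp, LinearMap.comp_assoc, hy,
      ← LinearMap.comp_assoc, hx, LinearMap.comp_assoc]

theorem surjective_of_val_mem_range {s : Set B} (f : A →ₐ[K] Algebra.adjoin K s)
    (h : ∀ x ∈ s, ∃ a, (f a : B) = x) : Function.Surjective f := fun ⟨y, hy⟩ => by
  have hle : Algebra.adjoin K s ≤ ((Algebra.adjoin K s).val.comp f).range := Algebra.adjoin_le h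
  obtain ⟨a, ha⟩ := hle hy
  exact ⟨a, Subtype.ext ha⟩

theorem adjoin_range_mkAlgHom_ι {X : Type*} (r : FreeAlgebra K X → FreeAlgebra K X → Prop) :
    Algebra.adjoin K (Set.range fun x => RingQuot.mkAlgHom K r (FreeAlgebra.ι K x)) = ⊤ := by
  rw [Set.range_comp' (RingQuot.mkAlgHom K r), ← AlgHom.map_adjoin, FreeAlgebra.adjoin_range_ι,
    Algebra.map_top, AlgHom.range_eq_top]
  exact RingQuot.mkAlgHom_surjective K r

theorem range_mul'_comp_map {V W : Type*} [AddCommMonoid V] [Module K V] [AddCommMonoid W]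
    [Module K W] (f : V →ₗ[K] A) (g : W →ₗ[K] A) :
    LinearMap.range (LinearMap.mul' K A ∘ₗ TensorProduct.map f g) =
      LinearMap.range f * LinearMap.range g := by
  rw [LinearMap.range_comp, TensorProduct.range_map, Submodule.map_map₂, Submodule.mul_eq_map₂]
  rfl

theorem mul_mem_toSubmodule_mul {S : Subalgebra K A} {M : Submodule K A} {x v : A} (hx : x ∈ S)
    (hv : v ∈ Subalgebra.toSubmodule S * M) : x * v ∈ Subalgebra.toSubmodule S * M := by
  rw [← S.isIdempotentElem_toSubmodule.eq, mul_assoc]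
  exact Submodule.mul_mem_mul hx hv

theorem mul_mem_toSubmodule_adjoin_mul {s : Set A} {M : Submodule K A} {e v : A}
    (he : ∀ x ∈ s, ∃ x' ∈ Algebra.adjoin K s, e * x = x' * e) (hM : ∀ m ∈ M, e * m ∈ M)
    (hv : v ∈ Subalgebra.toSubmodule (Algebra.adjoin K s) * M) :
    e * v ∈ Subalgebra.toSubmodule (Algebra.adjoin K s) * M := by
  induction hv using Submodule.mul_induction_on' with
  | mem_mul_mem x hx m hm =>
    obtain ⟨x', hx', h⟩ := exists_mul_eq_mul_of_mem_adjoin he hx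
    rw [← mul_assoc, h, mul_assoc]
    exact Submodule.mul_mem_mul hx' (hM m hm)
  | add x _ y _ hx hy => rw [mul_add]; exact add_mem hx hy

end Generic

section SerreAlg

variable {ι : Type} (C : CartanData ι)

/-- The form `(α_i, α_j) = d_i a_{ij}` on simple roots. -/
def CartanData.form (i j : ι) : ℤ :=
  C.d i * C.a i j

theorem CartanData.form_comm (i j : ι) : C.form i j = C.form j i :=
  C.symm i j

/-- The defining relations of `SerreAlg C`. -/
inductive SerreRel : FreeAlgebra KK ι → FreeAlgebra KK ι → Prop
  | serre {i j : ι} (hij : i ≠ j) :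
    SerreRel (serre (C.d i) (C.a i j) (FreeAlgebra.ι KK i) (FreeAlgebra.ι KK j)) 0

/-- The algebra presented by generators indexed by `ι` and the quantum Serre relations. -/
def SerreAlg : Type :=
  RingQuot (SerreRel C)

instance : Ring (SerreAlg C) :=
  inferInstanceAs (Ring (RingQuot (SerreRel C)))

instance : Algebra KK (SerreAlg C) :=
  inferInstanceAs (Algebra KK (RingQuot (SerreRel C)))

namespace SerreAlg

/-- The generators of `SerreAlg C`. -/
def gen (i : ι) : SerreAlg C :=
  RingQuot.mkAlgHom KK (SerreRel C) (FreeAlgebra.ι KK i)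

theorem isSerreFamily_gen : IsSerreFamily C (gen C) := fun i j hij => by
  have h := RingQuot.mkAlgHom_rel KK (SerreRel.serre (C := C) hij)
  rwa [map_serre, map_zero] at h

theorem adjoin_range_gen : Algebra.adjoin KK (Set.range (gen C)) = ⊤ :=
  adjoin_range_mkAlgHom_ι _

variable {C} {R : Type*} [Ring R] [Algebra KK R]

/-- The homomorphism determined by a family satisfying the Serre relations. -/
def lift (x : ι → R) (hx : IsSerreFamily C x) : SerreAlg C →ₐ[KK] R :=
  RingQuot.liftAlgHom KK ⟨FreeAlgebra.lift KK x, by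
    rintro _ _ ⟨hij⟩
    rw [map_serre, FreeAlgebra.lift_ι_apply, FreeAlgebra.lift_ι_apply, hx hij, map_zero]⟩

@[simp]
theorem lift_gen (x : ι → R) (hx : IsSerreFamily C x) (i : ι) : lift x hx (gen C i) = x i :=
  (RingQuot.liftAlgHom_mkAlgHom_apply ..).trans (FreeAlgebra.lift_ι_apply x i)

theorem algHom_ext {f g : SerreAlg C →ₐ[KK] R} (h : ∀ i, f (gen C i) = g (gen C i)) : f = g :=
  AlgHom.ext_of_adjoin_eq_top (adjoin_range_gen C) (Set.forall_mem_range.2 h)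

/-- The endomorphism multiplying the generator `i` by `q^{n_i}`. -/
def scale (n : ι → ℤ) : SerreAlg C →ₐ[KK] SerreAlg C :=
  lift (fun i => qpow (n i) • gen C i) ((isSerreFamily_gen C).smul _)

@[simp]
theorem scale_gen (n : ι → ℤ) (i : ι) : scale n (gen C i) = qpow (n i) • gen C i :=
  lift_gen ..

theorem scale_zero : scale (C := C) 0 = AlgHom.id KK _ :=
  algHom_ext fun i => by simp [qpow_zero]

theorem scale_add (m n : ι → ℤ) : scale (C := C) (m + n) = (scale m).comp (scale n) :=
  algHom_ext fun i => by simp [qpow_add, smul_smul, mul_comm]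

end SerreAlg

end SerreAlg

section TorusAlg

/-- The defining relations of `TorusAlg ι`: the generator `Sum.inr i` is inverse to `Sum.inl i`,
and the generators `Sum.inl i` commute. -/
inductive TorusRel (ι : Type) : FreeAlgebra KK (ι ⊕ ι) → FreeAlgebra KK (ι ⊕ ι) → Prop
  | mul_inv (i : ι) :
    TorusRel ι (FreeAlgebra.ι KK (Sum.inl i) * FreeAlgebra.ι KK (Sum.inr i)) 1
  | inv_mul (i : ι) :
    TorusRel ι (FreeAlgebra.ι KK (Sum.inr i) * FreeAlgebra.ι KK (Sum.inl i)) 1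
  | comm (i j : ι) :
    TorusRel ι (FreeAlgebra.ι KK (Sum.inl i) * FreeAlgebra.ι KK (Sum.inl j))
      (FreeAlgebra.ι KK (Sum.inl j) * FreeAlgebra.ι KK (Sum.inl i))

/-- The algebra of Laurent polynomials in commuting variables indexed by `ι`, presented so as to map
to noncommutative algebras. -/
def TorusAlg (ι : Type) : Type :=
  RingQuot (TorusRel ι)

instance (ι : Type) : Ring (TorusAlg ι) :=
  inferInstanceAs (Ring (RingQuot (TorusRel ι)))

instance (ι : Type) : Algebra KK (TorusAlg ι) :=
  inferInstanceAs (Algebra KK (RingQuot (TorusRel ι)))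

namespace TorusAlg

variable {ι : Type} {R : Type*} [Ring R] [Algebra KK R]

variable (ι) in
/-- The quotient map onto `TorusAlg ι`. -/
def mk : FreeAlgebra KK (ι ⊕ ι) →ₐ[KK] TorusAlg ι :=
  RingQuot.mkAlgHom KK (TorusRel ι)

theorem mk_eq_mk_of_rel {x y : FreeAlgebra KK (ι ⊕ ι)} (h : TorusRel ι x y) : mk ι x = mk ι y :=
  RingQuot.mkAlgHom_rel KK h

/-- The variables of `TorusAlg ι`. -/
def t (i : ι) : (TorusAlg ι)ˣ where
  val := mk ι (FreeAlgebra.ι KK (Sum.inl i))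
  inv := mk ι (FreeAlgebra.ι KK (Sum.inr i))
  val_inv := by rw [← map_mul, mk_eq_mk_of_rel (.mul_inv i), map_one]
  inv_val := by rw [← map_mul, mk_eq_mk_of_rel (.inv_mul i), map_one]

theorem commute_t (i j : ι) : Commute (t i).val (t j).val := by
  simp only [Commute, SemiconjBy, t, ← map_mul, mk_eq_mk_of_rel (.comm i j)]

theorem adjoin_range_t : Algebra.adjoin KK
    (Set.range (fun i : ι => (t i : TorusAlg ι)) ∪ Set.range fun i : ι => (↑(t i)⁻¹ : TorusAlg ι)) =
      ⊤ := by
  have h : Sum.elim (fun i => (t i : TorusAlg ι)) (fun i => ↑(t i)⁻¹) =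
      fun x => mk ι (FreeAlgebra.ι KK x) := funext (Sum.rec (fun _ => rfl) fun _ => rfl)
  rw [← Set.Sum.elim_range, h]
  exact adjoin_range_mkAlgHom_ι _

/-- The homomorphism determined by a family of commuting units. -/
def lift (g : ι → Rˣ) (hg : ∀ i j, Commute (g i : R) (g j)) : TorusAlg ι →ₐ[KK] R :=
  RingQuot.liftAlgHom KK
    ⟨FreeAlgebra.lift KK (Sum.elim (fun i => (g i : R)) fun i => (↑(g i)⁻¹ : R)), by
      rintro _ _ (i | i | ⟨i, j⟩)
      · simp
      · simp
      · simpa using (hg i j).eq⟩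

@[simp]
theorem lift_t (g : ι → Rˣ) (hg : ∀ i j, Commute (g i : R) (g j)) (i : ι) :
    lift g hg (t i : TorusAlg ι) = g i :=
  (RingQuot.liftAlgHom_mkAlgHom_apply ..).trans (FreeAlgebra.lift_ι_apply _ _)

@[simp]
theorem lift_t_inv (g : ι → Rˣ) (hg : ∀ i j, Commute (g i : R) (g j)) (i : ι) :
    lift g hg (↑(t i)⁻¹ : TorusAlg ι) = ↑(g i)⁻¹ :=
  (RingQuot.liftAlgHom_mkAlgHom_apply ..).trans (FreeAlgebra.lift_ι_apply _ _)

theorem algHom_ext {f g : TorusAlg ι →ₐ[KK] R} (h : ∀ i, f (t i).val = g (t i).val) : f = g := by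
  refine AlgHom.ext_of_adjoin_eq_top adjoin_range_t ?_
  rintro _ (⟨i, rfl⟩ | ⟨i, rfl⟩)
  · exact h i
  · have hi : Units.map (f : TorusAlg ι →* R) (t i) = Units.map (g : TorusAlg ι →* R) (t i) :=
      Units.ext (h i)
    exact congrArg (fun u : Rˣ => (↑u⁻¹ : R)) hi

/-- The endomorphism multiplying the variable `i` by `q^{n_i}`. -/
def scale (n : ι → ℤ) : TorusAlg ι →ₐ[KK] TorusAlg ι :=
  lift (fun i => qpowUnit (n i) • t i) fun i j =>
    ((commute_t i j).smul_left (qpowUnit (n i))).smul_right (qpowUnit (n j))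

@[simp]
theorem scale_t (n : ι → ℤ) (i : ι) :
    scale n (t i : TorusAlg ι) = qpow (n i) • (t i : TorusAlg ι) :=
  lift_t ..

theorem commute_scale (m n : ι → ℤ) :
    (scale (ι := ι) m).comp (scale n) = (scale n).comp (scale m) :=
  algHom_ext fun i => by simp [smul_smul, mul_comm]

end TorusAlg

end TorusAlg

section Units

variable {R : Type*} [Ring R] [Algebra KK R]

theorem inv_mul_eq_qpow_neg_smul {u : Rˣ} {x : R} {m : ℤ} (h : u * x = qpow m • (x * u)) :
    (↑u⁻¹ : R) * x = qpow (-m) • (x * ↑u⁻¹) := by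
  rw [Units.inv_mul_eq_iff_eq_mul, mul_smul_comm, ← mul_assoc, h, smul_mul_assoc, smul_smul,
    ← qpow_add, neg_add_cancel, qpow_zero, one_smul, Units.mul_inv_cancel_right]

theorem serreDeriv_single_units_eq_zero {ι : Type} [DecidableEq ι] (C : CartanData ι) {x : ι → R}
    {k : ι} {u : Rˣ} (hu : ∀ l, u * x l = qpow (C.form k l) • (x l * u)) (c : KK) {i j : ι}
    (hij : i ≠ j) :
    serreDeriv (C.d i) (C.a i j) (x i) (x j) ((Pi.single k (c • (u - ↑u⁻¹)) : ι → R) i)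
      ((Pi.single k (c • (u - ↑u⁻¹)) : ι → R) j) = 0 := by
  have hu' (l : ι) : -(c • (↑u⁻¹ : R)) * x l = qpow (-C.form k l) • (x l * -(c • (↑u⁻¹ : R))) := by
    rw [neg_mul, mul_neg, smul_mul_assoc, inv_mul_eq_qpow_neg_smul (hu l), mul_smul_comm,
      smul_comm c, smul_neg]
  rw [smul_sub, sub_eq_add_neg]
  exact serreDeriv_single_eq_zero C
    (fun l => by rw [smul_mul_assoc, hu, mul_smul_comm, smul_comm c]; rfl) hu' hij

end Units

section BorelRep

/-- A representation on `W` of the Borel part of `U_q(𝔤)`, generated by the `t_i` and the `e_i`. -/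
structure BorelRep {ι : Type} (C : CartanData ι) (W : Type*) [AddCommGroup W] [Module KK W] where
  T : ι → (Module.End KK W)ˣ
  E : ι → Module.End KK W
  commute_T : ∀ i j, Commute (T i).val (T j).val
  T_mul_E : ∀ i j, (T i).val * E j = qpow (C.form i j) • (E j * (T i).val)
  isSerreFamily_E : IsSerreFamily C E

/-- The space `SerreAlg C ⊗ W` underlying the `U_q(𝔤)`-module induced from a representation of the
Borel part on `W`. -/
def IndModule {ι : Type} (C : CartanData ι) (W : Type*) [AddCommGroup W] [Module KK W] : Type _ :=
  SerreAlg C ⊗[KK] W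

variable {ι : Type} (C : CartanData ι) (W : Type*) [AddCommGroup W] [Module KK W]

namespace IndModule

instance : AddCommGroup (IndModule C W) :=
  inferInstanceAs (AddCommGroup (SerreAlg C ⊗[KK] W))

instance : Module KK (IndModule C W) :=
  inferInstanceAs (Module KK (SerreAlg C ⊗[KK] W))

instance : Module (SerreAlg C) (IndModule C W) :=
  inferInstanceAs (Module (SerreAlg C) (SerreAlg C ⊗[KK] W))

instance : IsScalarTower KK (SerreAlg C) (IndModule C W) :=
  inferInstanceAs (IsScalarTower KK (SerreAlg C) (SerreAlg C ⊗[KK] W))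

/-- The action of `f_k` on `IndModule C W`. -/
def F (k : ι) : Module.End KK (IndModule C W) :=
  Algebra.lsmul KK KK _ (SerreAlg.gen C k)

theorem isSerreFamily_F : IsSerreFamily C (F C W) :=
  (SerreAlg.isSerreFamily_gen C).map (Algebra.lsmul KK KK (IndModule C W))

variable {C W}

/-- The pure tensors of `IndModule C W`. -/
def tmul : SerreAlg C →ₗ[KK] W →ₗ[KK] IndModule C W :=
  TensorProduct.mk KK (SerreAlg C) W

@[simp]
theorem smul_tmul (a b : SerreAlg C) (w : W) : a • tmul b w = tmul (a * b) w :=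
  rfl

@[simp]
theorem F_tmul (k : ι) (a : SerreAlg C) (w : W) :
    F C W k (tmul a w) = tmul (SerreAlg.gen C k * a) w :=
  rfl

theorem hom_ext {V : Type*} [AddCommGroup V] [Module KK V] {f g : IndModule C W →ₗ[KK] V}
    (h : ∀ a w, f (tmul a w) = g (tmul a w)) : f = g :=
  TensorProduct.ext' h

/-- The endomorphisms of `IndModule C W` acting on both tensor factors. -/
protected def map (f : Module.End KK (SerreAlg C)) (g : Module.End KK W) :
    Module.End KK (IndModule C W) :=
  TensorProduct.map f g

protected theorem map_mul (f f' : Module.End KK (SerreAlg C)) (g g' : Module.End KK W) :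
    IndModule.map (f * f') (g * g') = IndModule.map f g * IndModule.map f' g' :=
  TensorProduct.map_mul ..

protected theorem map_one :
    IndModule.map (1 : Module.End KK (SerreAlg C)) (1 : Module.End KK W) = 1 :=
  TensorProduct.map_one

theorem end_eq_zero {D : Module.End KK (IndModule C W)} (hD : ∀ w, D (tmul 1 w) = 0)
    (hF : ∀ k v, D v = 0 → D (F C W k v) = 0) : D = 0 := by
  refine hom_ext fun a w => ?_
  have ha : a ∈ Algebra.adjoin KK (Set.range (SerreAlg.gen C)) :=
    SerreAlg.adjoin_range_gen C ▸ Algebra.mem_top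
  have h : a • tmul 1 w ∈ LinearMap.ker D :=
    smul_mem_of_mem_adjoin (Set.forall_mem_range.2 hF) ha (hD w)
  rwa [smul_tmul, mul_one] at h

end IndModule

namespace BorelRep

open IndModule TrivSqZeroExt

variable {C W} (ρ : BorelRep C W)

/-- The action of `t_i` on the module induced from `ρ`. -/
def indT (i : ι) : (Module.End KK (IndModule C W))ˣ where
  val := IndModule.map (SerreAlg.scale (-C.form i)).toLinearMap (ρ.T i).val
  inv := IndModule.map (SerreAlg.scale (C.form i)).toLinearMap (ρ.T i)⁻¹.val
  val_inv := by
    rw [← IndModule.map_mul, Units.mul_inv, Module.End.mul_eq_comp, ← AlgHom.comp_toLinearMap,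
      ← SerreAlg.scale_add, neg_add_cancel, SerreAlg.scale_zero]
    exact IndModule.map_one
  inv_val := by
    rw [← IndModule.map_mul, Units.inv_mul, Module.End.mul_eq_comp, ← AlgHom.comp_toLinearMap,
      ← SerreAlg.scale_add, add_neg_cancel, SerreAlg.scale_zero]
    exact IndModule.map_one

@[simp]
theorem indT_tmul (i : ι) (a : SerreAlg C) (w : W) :
    (ρ.indT i).val (tmul a w) = tmul (SerreAlg.scale (-C.form i) a) ((ρ.T i).val w) :=
  rfl

@[simp]
theorem indT_inv_tmul (i : ι) (a : SerreAlg C) (w : W) :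
    (ρ.indT i)⁻¹.val (tmul a w) = tmul (SerreAlg.scale (C.form i) a) ((ρ.T i)⁻¹.val w) :=
  rfl

theorem commute_indT (i j : ι) : Commute (ρ.indT i).val (ρ.indT j).val := by
  refine hom_ext fun a w => ?_
  have ha := SerreAlg.scale_add (C := C) (-C.form i) (-C.form j)
  rw [add_comm, SerreAlg.scale_add] at ha
  have hw := (ρ.commute_T i j).eq
  simpa using congrArg₂ (fun b v => tmul b v) (AlgHom.congr_fun ha.symm a)
    (LinearMap.congr_fun hw w)

theorem indT_mul_F (i k : ι) :
    (ρ.indT i).val * F C W k = qpow (-C.form i k) • (F C W k * (ρ.indT i).val) :=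
  hom_ext fun a w => by simp

theorem indT_inv_mul_F (i k : ι) :
    (ρ.indT i)⁻¹.val * F C W k = qpow (C.form i k) • (F C W k * (ρ.indT i)⁻¹.val) := by
  simpa using inv_mul_eq_qpow_neg_smul (ρ.indT_mul_F i k)

/-- The operator `(t_i - t_i⁻¹) / (q_i - q_i⁻¹)` on the induced module. -/
def indH (i : ι) : Module.End KK (IndModule C W) :=
  (qpow (C.d i) - qpow (-C.d i))⁻¹ • ((ρ.indT i).val - (ρ.indT i)⁻¹.val)

/-- The value `δ_{ik} (t_i - t_i⁻¹) / (q_i - q_i⁻¹)` prescribed for `⁅e_i, f_k⁆`. -/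
def indDelta [DecidableEq ι] (i k : ι) : Module.End KK (IndModule C W) :=
  (Pi.single i (ρ.indH i) : ι → Module.End KK (IndModule C W)) k

variable [DecidableEq ι]

theorem serreDeriv_indDelta_eq_zero (i : ι) {k l : ι} (hkl : k ≠ l) :
    serreDeriv (C.d k) (C.a k l) (F C W k) (F C W l) (ρ.indDelta i k) (ρ.indDelta i l) = 0 := by
  have h := serreDeriv_single_units_eq_zero C (ρ.indT_inv_mul_F i)
    (-(qpow (C.d i) - qpow (-C.d i))⁻¹) hkl
  rw [neg_smul, ← smul_neg, neg_sub, inv_inv] at h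
  exact h

/-- The first-order deformation of the action of `SerreAlg C` on the induced module in the direction
`⁅e_i, f_k⁆`; its `ε`-part is the derivation `⁅e_i, ·⁆`. -/
def deform (i : ι) : SerreAlg C →ₐ[KK] DualNumber (Module.End KK (IndModule C W)) :=
  SerreAlg.lift _ ((isSerreFamily_F C W).inl_add_inr fun _ _ => ρ.serreDeriv_indDelta_eq_zero i)

@[simp]
theorem deform_gen (i k : ι) :
    ρ.deform i (SerreAlg.gen C k) = inl (F C W k) + inr (ρ.indDelta i k) :=
  SerreAlg.lift_gen ..

theorem fst_deform (i : ι) (a : SerreAlg C) :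
    (ρ.deform i a).fst = Algebra.lsmul KK KK (IndModule C W) a := by
  have h : (fstHom KK _ _).comp (ρ.deform i) = Algebra.lsmul KK KK (IndModule C W) :=
    SerreAlg.algHom_ext fun k => by
      rw [AlgHom.comp_apply, deform_gen, fstHom_apply]
      simp [F]
  exact AlgHom.congr_fun h a

/-- The action of `e_i` on the module induced from `ρ`. -/
def indE (i : ι) : Module.End KK (IndModule C W) :=
  TensorProduct.lift <| LinearMap.mk₂ KK
    (fun a w => tmul a (ρ.E i w) + (ρ.deform i a).snd (tmul 1 w))
    (fun a b w => by
      simp only [map_add, snd_add, LinearMap.add_apply]; abel)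
    (fun c a w => by
      simp only [map_smul, snd_smul, LinearMap.smul_apply, smul_add])
    (fun a v w => by simp only [map_add]; abel)
    (fun c a w => by simp only [map_smul, smul_add])

theorem indE_tmul (i : ι) (a : SerreAlg C) (w : W) :
    ρ.indE i (tmul a w) = tmul a (ρ.E i w) + (ρ.deform i a).snd (tmul 1 w) :=
  rfl

@[simp]
theorem indE_one_tmul (i : ι) (w : W) : ρ.indE i (tmul 1 w) = tmul 1 (ρ.E i w) := by
  rw [indE_tmul, map_one (ρ.deform i), snd_one, LinearMap.zero_apply, add_zero]

theorem lie_indE_F (i k : ι) : ⁅ρ.indE i, F C W k⁆ = ρ.indDelta i k := by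
  rw [Ring.lie_def, sub_eq_iff_eq_add]
  refine hom_ext fun a w => ?_
  simp only [Module.End.mul_apply, LinearMap.add_apply, F_tmul, indE_tmul, map_mul, deform_gen,
    snd_mul, fst_add, snd_add, fst_inl, snd_inl, fst_inr, snd_inr, fst_deform, add_zero, zero_add,
    smul_eq_mul, MulOpposite.smul_eq_mul_unop, MulOpposite.unop_op, Algebra.lsmul_coe, smul_tmul,
    mul_one, map_add]
  abel

theorem indT_mul_indDelta (i j k : ι) : (ρ.indT i).val * ρ.indDelta j k =
    qpow (C.form i j - C.form i k) • (ρ.indDelta j k * (ρ.indT i).val) := by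
  rcases eq_or_ne k j with rfl | hkj
  · have h : Commute (ρ.indT i).val (ρ.indH k) :=
      ((ρ.commute_indT i k).sub_right (ρ.commute_indT i k).units_inv_right).smul_right _
    rw [sub_self, qpow_zero, one_smul, indDelta, Pi.single_eq_same, h.eq]
  · rw [indDelta, Pi.single_eq_of_ne hkj, zero_mul, mul_zero, smul_zero]

theorem qCommutator_mul_F (i j k : ι) :
    ((ρ.indT i).val * ρ.indE j - qpow (C.form i j) • (ρ.indE j * (ρ.indT i).val)) * F C W k =
      qpow (-C.form i k) • (F C W k *
        ((ρ.indT i).val * ρ.indE j - qpow (C.form i j) • (ρ.indE j * (ρ.indT i).val))) := by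
  have hEF : ρ.indE j * F C W k = ρ.indDelta j k + F C W k * ρ.indE j := by
    rw [← lie_indE_F, Ring.lie_def, sub_add_cancel]
  have hTEF : (ρ.indT i).val * ρ.indE j * F C W k =
      qpow (C.form i j) • qpow (-C.form i k) • (ρ.indDelta j k * (ρ.indT i).val) +
        qpow (-C.form i k) • (F C W k * ((ρ.indT i).val * ρ.indE j)) := by
    rw [mul_assoc, hEF, mul_add, indT_mul_indDelta, ← mul_assoc, indT_mul_F, smul_mul_assoc,
      mul_assoc, smul_smul, ← qpow_add, ← sub_eq_add_neg]
  have hETF : ρ.indE j * (ρ.indT i).val * F C W k =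
      qpow (-C.form i k) • (ρ.indDelta j k * (ρ.indT i).val) +
        qpow (-C.form i k) • (F C W k * (ρ.indE j * (ρ.indT i).val)) := by
    rw [mul_assoc, indT_mul_F, mul_smul_comm, ← mul_assoc, hEF, add_mul, smul_add, mul_assoc]
  rw [sub_mul, smul_mul_assoc, hTEF, hETF, smul_add, add_sub_add_left_eq_sub, mul_sub, smul_sub,
    mul_smul_comm, smul_comm (qpow (C.form i j))]

theorem indT_mul_indE (i j : ι) :
    (ρ.indT i).val * ρ.indE j = qpow (C.form i j) • (ρ.indE j * (ρ.indT i).val) := by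
  rw [← sub_eq_zero]
  refine end_eq_zero (fun w => ?_) fun k v hv => ?_
  · have h : (ρ.T i).val (ρ.E j w) = qpow (C.form i j) • ρ.E j ((ρ.T i).val w) :=
      LinearMap.congr_fun (ρ.T_mul_E i j) w
    simp [h]
  · rw [← Module.End.mul_apply, qCommutator_mul_F, LinearMap.smul_apply, Module.End.mul_apply, hv,
      map_zero, smul_zero]

theorem lie_F_indE (k l : ι) : ⁅F C W k, ρ.indE l⁆ =
    (Pi.single k (-(qpow (C.d k) - qpow (-C.d k))⁻¹ • ((ρ.indT k).val - (ρ.indT k)⁻¹.val)) :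
      ι → Module.End KK (IndModule C W)) l := by
  rw [Ring.lie_def, ← neg_sub, ← Ring.lie_def, lie_indE_F, indDelta]
  rcases eq_or_ne k l with rfl | hkl
  · rw [Pi.single_eq_same, Pi.single_eq_same, neg_smul, indH]
  · rw [Pi.single_eq_of_ne hkl, Pi.single_eq_of_ne hkl.symm, neg_zero]

theorem isSerreFamily_indE : IsSerreFamily C ρ.indE := fun i j hij => by
  refine end_eq_zero (fun w => ?_) fun k v hv => ?_
  · have h := comp_eq_comp_of_adjoin_eq_top (FreeAlgebra.adjoin_range_ι KK ι)
      (FreeAlgebra.lift KK ρ.indE) (FreeAlgebra.lift KK ρ.E) (p := tmul 1)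
      (Set.forall_mem_range.2 fun i => LinearMap.ext fun w => by simp)
      (serre (C.d i) (C.a i j) (FreeAlgebra.ι KK i) (FreeAlgebra.ι KK j))
    simp only [map_serre, FreeAlgebra.lift_ι_apply, ρ.isSerreFamily_E hij] at h
    simpa using LinearMap.congr_fun h w
  · have h : ⁅F C W k, serre (C.d i) (C.a i j) (ρ.indE i) (ρ.indE j)⁆ = 0 := by
      rw [← serreDeriv_lie, lie_F_indE, lie_F_indE]
      exact serreDeriv_single_units_eq_zero C (ρ.indT_mul_indE k) _ hij
    rw [← Module.End.mul_apply, ← sub_eq_zero.1 h, Module.End.mul_apply, hv, map_zero]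

/-- The operators by which the generators of `U_q(𝔤)` act on the module induced from `ρ`. -/
def indGen : QGen ι → Module.End KK (IndModule C W)
  | .e i => ρ.indE i
  | .f i => F C W i
  | .t i => (ρ.indT i).val
  | .tinv i => (ρ.indT i)⁻¹.val

theorem lift_indGen_eq_of_qRel {x y : FA ι} (h : QRel C x y) :
    FreeAlgebra.lift KK ρ.indGen x = FreeAlgebra.lift KK ρ.indGen y := by
  cases h with
  | t_tinv i => simp [gT, gTinv, indGen]
  | tinv_t i => simp [gT, gTinv, indGen]
  | t_t i j => simpa [gT, indGen] using (ρ.commute_indT i j).eq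
  | t_tinv_comm i j => simpa [gT, gTinv, indGen] using (ρ.commute_indT i j).units_inv_right.eq
  | t_e i j => simpa [gT, ge, indGen, CartanData.form] using ρ.indT_mul_indE i j
  | t_f i j => simpa [gT, gf, indGen, CartanData.form] using ρ.indT_mul_F i j
  | e_f i j =>
    have h := ρ.lie_indE_F i j
    rw [Ring.lie_def, indDelta, Pi.single_apply, indH] at h
    simpa [ge, gf, gT, gTinv, indGen, apply_ite, eq_comm] using h
  | serre_e i j hij =>
    rw [map_zero, ← ρ.isSerreFamily_indE hij]
    exact (map_serre _ _ _ _ _).trans (by simp [ge, indGen])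
  | serre_f i j hij =>
    rw [map_zero, ← isSerreFamily_F C W hij]
    exact (map_serre _ _ _ _ _).trans (by simp [gf, indGen])

/-- The `U_q(𝔤)`-module induced from `ρ`. -/
def rep : Uq C →ₐ[KK] Module.End KK (IndModule C W) :=
  RingQuot.liftAlgHom KK ⟨FreeAlgebra.lift KK ρ.indGen, fun _ _ => ρ.lift_indGen_eq_of_qRel⟩

theorem rep_uMk_ι (g : QGen ι) : ρ.rep (uMk C (FreeAlgebra.ι KK g)) = ρ.indGen g :=
  (RingQuot.liftAlgHom_mkAlgHom_apply ..).trans (FreeAlgebra.lift_ι_apply _ _)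

end BorelRep

end BorelRep

section ParabolicRep

theorem IsSerreFamily.tensorMap {ι : Type} {C : CartanData ι} {V W : Type*} [AddCommGroup V]
    [Module KK V] [AddCommGroup W] [Module KK W] {p : ι → Module.End KK V} {x : ι → Module.End KK W}
    (hx : IsSerreFamily C x) (hp : ∀ i j, Commute (p i) (p j)) :
    IsSerreFamily C fun i => TensorProduct.map (p i) (x i) := by
  have h := (hx.map (Module.End.lTensorAlgHom KK W V)).mul
    (p := Module.End.rTensorAlgHom KK V W ∘ p)
    (fun i j => (hp i j).map (Module.End.rTensorAlgHom KK V W))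
    fun i j => (LinearMap.rTensor_comp_lTensor ..).trans (LinearMap.lTensor_comp_rTensor ..).symm
  convert h using 2
  exact (LinearMap.rTensor_comp_lTensor ..).symm

variable {ι : Type} (C : CartanData ι) (J : Set ι)

/-- Left multiplication by `e_i` on `SerreAlg (C.restrict J)`, where `e_i = 0` for `i ∉ J`. -/
def mulGen : ι → Module.End KK (SerreAlg (C.restrict J)) :=
  Function.extend (↑) (Algebra.lmul KK _ ∘ SerreAlg.gen (C.restrict J)) 0

theorem mulGen_coe (j : J) (x : SerreAlg (C.restrict J)) :
    mulGen C J j x = SerreAlg.gen (C.restrict J) j * x :=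
  LinearMap.congr_fun (Subtype.val_injective.extend_apply _ _ j) x

theorem isSerreFamily_mulGen : IsSerreFamily C (mulGen C J) :=
  ((SerreAlg.isSerreFamily_gen _).map (Algebra.lmul KK _)).extend

/-- The action of the parabolic `e_i` on `U⁰ ⊗ U⁺`: moving `e_i` past `t_j` rescales it. -/
def parabolicE (i : ι) : Module.End KK (TorusAlg ι ⊗[KK] SerreAlg (C.restrict J)) :=
  TensorProduct.map (TorusAlg.scale (-C.form i)).toLinearMap (mulGen C J i)

theorem isSerreFamily_parabolicE : IsSerreFamily C (parabolicE C J) :=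
  (isSerreFamily_mulGen C J).tensorMap fun i j => by
    rw [Commute, SemiconjBy, Module.End.mul_eq_comp, Module.End.mul_eq_comp,
      ← AlgHom.comp_toLinearMap, TorusAlg.commute_scale, AlgHom.comp_toLinearMap]

/-- The representation of the Borel part of `U_q(𝔤)` on `U⁰ ⊗ U⁺` in which `e_i`, `i ∉ J`, acts by
zero and the other generators act by left multiplication. -/
def parabolicRep : BorelRep C (TorusAlg ι ⊗[KK] SerreAlg (C.restrict J)) where
  T i := Units.map
    (Algebra.lsmul KK KK (TorusAlg ι ⊗[KK] SerreAlg (C.restrict J))).toMonoidHom (TorusAlg.t i)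
  E := parabolicE C J
  commute_T i j := (TorusAlg.commute_t i j).map
    (Algebra.lsmul KK KK (TorusAlg ι ⊗[KK] SerreAlg (C.restrict J)))
  T_mul_E i j := by
    refine TensorProduct.ext' fun x y => ?_
    simp [parabolicE, TensorProduct.smul_tmul', C.form_comm j i, smul_smul, ← qpow_add, qpow_zero]
  isSerreFamily_E := isSerreFamily_parabolicE C J

end ParabolicRep

section FreeAlgebra

variable {ι : Type} (J : Set ι)

/-- The generators of `U_q(𝔭_J)` in the free algebra on the generators of `U_q(𝔤)`. -/
def freeGen : QGenP ι J → FA ι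
  | .e j => ge j
  | .f i => gf i
  | .t i => gT i
  | .tinv i => gTinv i

/-- The inclusion of free algebras lifting the canonical homomorphism `U_q(𝔭_J) → U_q(𝔤)`. -/
def freeIncl : FAP ι J →ₐ[KK] FA ι :=
  FreeAlgebra.lift KK (freeGen J)

@[simp]
theorem freeIncl_pge (j : J) : freeIncl J (pge J j) = ge (j : ι) :=
  FreeAlgebra.lift_ι_apply ..

@[simp]
theorem freeIncl_pgf (i : ι) : freeIncl J (pgf J i) = gf i :=
  FreeAlgebra.lift_ι_apply ..

@[simp]
theorem freeIncl_pgT (i : ι) : freeIncl J (pgT J i) = gT i :=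
  FreeAlgebra.lift_ι_apply ..

@[simp]
theorem freeIncl_pgTinv (i : ι) : freeIncl J (pgTinv J i) = gTinv i :=
  FreeAlgebra.lift_ι_apply ..

end FreeAlgebra

section Parabolic

variable (C : CartanData I) (J : Set I)

variable {C J} in
theorem QRelP.map_freeIncl {x y : FAP I J} (h : QRelP C J x y) :
    QRel C (freeIncl J x) (freeIncl J y) := by
  cases h with
  | t_tinv i => simpa using QRel.t_tinv i
  | tinv_t i => simpa using QRel.tinv_t i
  | t_t i j => simpa using QRel.t_t i j
  | t_tinv_comm i j => simpa using QRel.t_tinv_comm i j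
  | t_e i j => simpa using QRel.t_e i (j : I)
  | t_f i j => simpa using QRel.t_f i j
  | e_f i j => simpa [apply_ite (freeIncl J)] using QRel.e_f (C := C) i j
  | serre_e i j hij =>
    have h : freeIncl J (pserreE C J i j) = serreE C i j :=
      (map_serre ..).trans (by rw [freeIncl_pge, freeIncl_pge]; rfl)
    rw [h, map_zero]
    exact .serre_e _ _ hij
  | serre_f i j hij =>
    have h : freeIncl J (pserreF C J i j) = serreF C i j :=
      (map_serre ..).trans (by rw [freeIncl_pgf, freeIncl_pgf]; rfl)
    rw [h, map_zero]
    exact .serre_f _ _ hij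

/-- The canonical homomorphism `U_q(𝔭_J) → U_q(𝔤)`. -/
def canonicalHom : UqP C J →ₐ[KK] Uq C :=
  RingQuot.liftAlgHom KK
    ⟨(uMk C).comp (freeIncl J), fun _ _ h => RingQuot.mkAlgHom_rel KK h.map_freeIncl⟩

theorem canonicalHom_pMk (x : FAP I J) : canonicalHom C J (pMk C J x) = uMk C (freeIncl J x) :=
  RingQuot.liftAlgHom_mkAlgHom_apply ..

@[simp]
theorem canonicalHom_pE (j : J) : canonicalHom C J (pE C J j) = uE C j := by
  rw [pE, canonicalHom_pMk, freeIncl_pge, uE]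

@[simp]
theorem canonicalHom_pF (i : I) : canonicalHom C J (pF C J i) = uF C i := by
  rw [pF, canonicalHom_pMk, freeIncl_pgf, uF]

@[simp]
theorem canonicalHom_pT (i : I) : canonicalHom C J (pT C J i) = uT C i := by
  rw [pT, canonicalHom_pMk, freeIncl_pgT, uT]

@[simp]
theorem canonicalHom_pTinv (i : I) : canonicalHom C J (pTinv C J i) = uTinv C i := by
  rw [pTinv, canonicalHom_pMk, freeIncl_pgTinv, uTinv]

variable {C J} in
theorem pMk_eq_pMk_of_rel {x y : FAP I J} (h : QRelP C J x y) : pMk C J x = pMk C J y :=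
  RingQuot.mkAlgHom_rel KK h

/-- The generator `t_i` of `U_q(𝔭_J)` as a unit. -/
def pTUnit (i : I) : (UqP C J)ˣ where
  val := pT C J i
  inv := pTinv C J i
  val_inv := by rw [pT, pTinv, ← map_mul, pMk_eq_pMk_of_rel (.t_tinv i), map_one]
  inv_val := by rw [pT, pTinv, ← map_mul, pMk_eq_pMk_of_rel (.tinv_t i), map_one]

theorem commute_pT (i j : I) : Commute (pT C J i) (pT C J j) := by
  rw [Commute, SemiconjBy, pT, pT, ← map_mul, pMk_eq_pMk_of_rel (.t_t i j), map_mul]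

theorem pT_mul_pE (i : I) (j : J) :
    pT C J i * pE C J j = qpow (C.form i j) • (pE C J j * pT C J i) := by
  rw [pT, pE, ← map_mul, pMk_eq_pMk_of_rel (.t_e i j), map_smul, map_mul]; rfl

theorem pT_mul_pF (i j : I) :
    pT C J i * pF C J j = qpow (-C.form i j) • (pF C J j * pT C J i) := by
  rw [pT, pF, ← map_mul, pMk_eq_pMk_of_rel (.t_f i j), map_smul, map_mul]; rfl

theorem lie_pE_pF (j : J) (i : I) : ⁅pE C J j, pF C J i⁆ =
    if (j : I) = i then (qpow (C.d j) - qpow (-C.d j))⁻¹ • (pT C J j - pTinv C J j) else 0 := by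
  rw [Ring.lie_def, pE, pF, ← map_mul, ← map_mul, ← map_sub, pMk_eq_pMk_of_rel (.e_f j i),
    apply_ite (pMk C J)]
  simp [pT, pTinv]

theorem isSerreFamily_pE : IsSerreFamily (C.restrict J) (pE C J) := fun i j hij => by
  have h := pMk_eq_pMk_of_rel (QRelP.serre_e (C := C) i j (Subtype.coe_ne_coe.2 hij))
  rw [map_zero] at h
  exact (map_serre ..).symm.trans h

theorem isSerreFamily_pF : IsSerreFamily C (pF C J) := fun i j hij => by
  have h := pMk_eq_pMk_of_rel (QRelP.serre_f (C := C) (J := J) i j hij)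
  rw [map_zero] at h
  exact (map_serre ..).symm.trans h

theorem adjoin_generators :
    Algebra.adjoin KK (Set.range (pE C J) ∪ Set.range (pF C J) ∪ Set.range (pT C J) ∪
      Set.range (pTinv C J)) = ⊤ := by
  rw [eq_top_iff, ← adjoin_range_mkAlgHom_ι (QRelP C J)]
  refine Algebra.adjoin_mono ?_
  rintro _ ⟨j | i | i | i, rfl⟩
  · exact .inl (.inl (.inl ⟨j, rfl⟩))
  · exact .inl (.inl (.inr ⟨i, rfl⟩))
  · exact .inl (.inr ⟨i, rfl⟩)
  · exact .inr ⟨i, rfl⟩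

end Parabolic

section Injectivity

open IndModule

variable (C : CartanData I) (J : Set I)

/-- The homomorphism from `SerreAlg C` onto `U_q⁻(𝔭_J)`. -/
def toPneg : SerreAlg C →ₐ[KK] Pneg C J :=
  SerreAlg.lift (R := Pneg C J) _ <|
    (isSerreFamily_pF C J).codRestrict (Pneg C J) fun i => Algebra.subset_adjoin ⟨i, rfl⟩

/-- The homomorphism from `SerreAlg (C.restrict J)` onto `U_q⁺(𝔭_J)`. -/
def toPpos : SerreAlg (C.restrict J) →ₐ[KK] Ppos C J :=
  SerreAlg.lift (R := Ppos C J) _ <|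
    (isSerreFamily_pE C J).codRestrict (Ppos C J) fun j => Algebra.subset_adjoin ⟨j, rfl⟩

/-- The generator `t_i` of `U_q⁰(𝔭_J)` as a unit. -/
def pzeroUnit (i : I) : (Pzero C J)ˣ where
  val := ⟨pT C J i, Algebra.subset_adjoin (.inl ⟨i, rfl⟩)⟩
  inv := ⟨pTinv C J i, Algebra.subset_adjoin (.inr ⟨i, rfl⟩)⟩
  val_inv := Subtype.ext (pTUnit C J i).val_inv
  inv_val := Subtype.ext (pTUnit C J i).inv_val

theorem commute_pzeroUnit (i j : I) :
    Commute (pzeroUnit C J i).val (pzeroUnit C J j).val :=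
  Subtype.ext (commute_pT C J i j)

/-- The homomorphism from the Laurent polynomials onto `U_q⁰(𝔭_J)`. -/
def toPzero : TorusAlg I →ₐ[KK] Pzero C J :=
  TorusAlg.lift (R := Pzero C J) (pzeroUnit C J) (commute_pzeroUnit C J)

@[simp]
theorem toPneg_gen (i : I) : (toPneg C J (SerreAlg.gen C i) : UqP C J) = pF C J i := by
  rw [toPneg, SerreAlg.lift_gen]

@[simp]
theorem toPpos_gen (j : J) : (toPpos C J (SerreAlg.gen _ j) : UqP C J) = pE C J j := by
  rw [toPpos, SerreAlg.lift_gen]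

@[simp]
theorem toPzero_t (i : I) : (toPzero C J (TorusAlg.t i).val : UqP C J) = pT C J i := by
  rw [toPzero, TorusAlg.lift_t, pzeroUnit]

@[simp]
theorem toPzero_t_inv (i : I) : (toPzero C J (TorusAlg.t i)⁻¹.val : UqP C J) = pTinv C J i := by
  rw [toPzero, TorusAlg.lift_t_inv]; rfl

theorem toPneg_surjective : Function.Surjective (toPneg C J) :=
  surjective_of_val_mem_range _ <| Set.forall_mem_range.2 fun i => ⟨_, toPneg_gen C J i⟩

theorem toPpos_surjective : Function.Surjective (toPpos C J) :=
  surjective_of_val_mem_range _ <| Set.forall_mem_range.2 fun j => ⟨_, toPpos_gen C J j⟩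

theorem toPzero_surjective : Function.Surjective (toPzero C J) := by
  refine surjective_of_val_mem_range _ ?_
  rintro _ (⟨i, rfl⟩ | ⟨i, rfl⟩)
  · exact ⟨_, toPzero_t C J i⟩
  · exact ⟨_, toPzero_t_inv C J i⟩

/-- The action of `U_q(𝔭_J)` on the `U_q(𝔤)`-module induced from `parabolicRep`. -/
def parabolicAct : UqP C J →ₐ[KK]
    Module.End KK (IndModule C (TorusAlg I ⊗[KK] SerreAlg (C.restrict J))) :=
  (parabolicRep C J).rep.comp (canonicalHom C J)

@[simp]
theorem parabolicAct_pE (j : J) : parabolicAct C J (pE C J j) = (parabolicRep C J).indE j := by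
  rw [parabolicAct, AlgHom.comp_apply, canonicalHom_pE]
  exact (parabolicRep C J).rep_uMk_ι _

@[simp]
theorem parabolicAct_pF (i : I) : parabolicAct C J (pF C J i) = F C _ i := by
  rw [parabolicAct, AlgHom.comp_apply, canonicalHom_pF]
  exact (parabolicRep C J).rep_uMk_ι _

@[simp]
theorem parabolicAct_pT (i : I) :
    parabolicAct C J (pT C J i) = ((parabolicRep C J).indT i).val := by
  rw [parabolicAct, AlgHom.comp_apply, canonicalHom_pT]
  exact (parabolicRep C J).rep_uMk_ι _

@[simp]
theorem parabolicAct_pTinv (i : I) :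
    parabolicAct C J (pTinv C J i) = ((parabolicRep C J).indT i)⁻¹.val := by
  rw [parabolicAct, AlgHom.comp_apply, canonicalHom_pTinv]
  exact (parabolicRep C J).rep_uMk_ι _

theorem parabolicAct_toPneg (x : SerreAlg C) :
    parabolicAct C J (toPneg C J x) = Algebra.lsmul KK KK _ x := by
  have h : (parabolicAct C J).comp ((Pneg C J).val.comp (toPneg C J)) = Algebra.lsmul KK KK _ :=
    SerreAlg.algHom_ext fun i => by simp [F]
  exact AlgHom.congr_fun h x

theorem parabolicAct_toPzero_tmul_one (t : TorusAlg I)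
    (w : TorusAlg I ⊗[KK] SerreAlg (C.restrict J)) :
    parabolicAct C J (toPzero C J t) (tmul 1 w) = tmul 1 (t • w) := by
  have h := comp_eq_comp_of_adjoin_eq_top TorusAlg.adjoin_range_t
    ((parabolicAct C J).comp ((Pzero C J).val.comp (toPzero C J))) (Algebra.lsmul KK KK _)
    (p := tmul 1) (fun t ht => LinearMap.ext fun w => ?_) t
  · exact LinearMap.congr_fun h w
  obtain ⟨i, rfl⟩ | ⟨i, rfl⟩ := ht
  · simp [parabolicRep]
  · simp [parabolicRep]

theorem parabolicAct_toPpos_tmul_one (x y : SerreAlg (C.restrict J)) :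
    parabolicAct C J (toPpos C J x) (tmul 1 (1 ⊗ₜ y)) = tmul 1 (1 ⊗ₜ (x * y)) := by
  have h := comp_eq_comp_of_adjoin_eq_top (SerreAlg.adjoin_range_gen _)
    ((parabolicAct C J).comp ((Ppos C J).val.comp (toPpos C J))) (Algebra.lmul KK _)
    (p := tmul 1 ∘ₗ TensorProduct.mk KK _ _ 1)
    (Set.forall_mem_range.2 fun j => LinearMap.ext fun y => ?_) x
  · exact LinearMap.congr_fun h y
  simp [parabolicRep, parabolicE, mulGen_coe]

theorem parabolicAct_triMul (x : SerreAlg C) (t : TorusAlg I) (y : SerreAlg (C.restrict J)) :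
    parabolicAct C J (triMul C J (toPneg C J x ⊗ₜ toPzero C J t ⊗ₜ toPpos C J y))
      (tmul 1 (1 ⊗ₜ 1)) = tmul x (t ⊗ₜ y) := by
  change parabolicAct C J (toPneg C J x * toPzero C J t * toPpos C J y) _ = _
  rw [map_mul, map_mul, Module.End.mul_apply, Module.End.mul_apply, parabolicAct_toPpos_tmul_one,
    parabolicAct_toPzero_tmul_one, parabolicAct_toPneg]
  simp [TensorProduct.smul_tmul']

theorem canonicalHom_triMul_injective : Function.Injective (canonicalHom C J ∘ triMul C J) := by
  let p := TensorProduct.map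
    (TensorProduct.map (toPneg C J).toLinearMap (toPzero C J).toLinearMap) (toPpos C J).toLinearMap
  have hp : Function.Surjective p :=
    TensorProduct.map_surjective
      (TensorProduct.map_surjective (toPneg_surjective C J) (toPzero_surjective C J))
      (toPpos_surjective C J)
  let ev : Uq C →ₗ[KK] IndModule C (TorusAlg I ⊗[KK] SerreAlg (C.restrict J)) :=
    LinearMap.applyₗ (tmul 1 (1 ⊗ₜ 1)) ∘ₗ (parabolicRep C J).rep.toLinearMap
  have h : ev ∘ₗ (canonicalHom C J).toLinearMap ∘ₗ triMul C J ∘ₗ p =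
      (TensorProduct.assoc KK _ _ _).toLinearMap :=
    TensorProduct.ext_threefold (parabolicAct_triMul C J)
  have hinj : Function.Injective (ev ∘ₗ (canonicalHom C J).toLinearMap ∘ₗ triMul C J ∘ₗ p) := by
    rw [h]; exact (TensorProduct.assoc KK _ _ _).injective
  exact .of_comp_right (.of_comp (f := ev) hinj) hp

end Injectivity

section Surjectivity

variable (C : CartanData I) (J : Set I)

theorem pTinv_mul_pF (i j : I) :
    pTinv C J i * pF C J j = qpow (C.form i j) • (pF C J j * pTinv C J i) := by
  rw [← neg_neg (C.form i j)]
  exact inv_mul_eq_qpow_neg_smul (u := pTUnit C J i) (pT_mul_pF C J i j)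

theorem pE_mul_pT (j : J) (i : I) :
    pE C J j * pT C J i = qpow (-C.form i j) • (pT C J i * pE C J j) := by
  rw [pT_mul_pE, smul_smul, ← qpow_add, neg_add_cancel, qpow_zero, one_smul]

theorem pE_mul_pTinv (j : J) (i : I) :
    pE C J j * pTinv C J i = qpow (C.form i j) • (pTinv C J i * pE C J j) := by
  have h : pTinv C J i * pE C J j = qpow (-C.form i j) • (pE C J j * pTinv C J i) :=
    inv_mul_eq_qpow_neg_smul (u := pTUnit C J i) (pT_mul_pE C J i j)
  rw [h, smul_smul, ← qpow_add, add_neg_cancel, qpow_zero, one_smul]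

/-- The span `U_q⁰(𝔭_J) U_q⁺(𝔭_J)` of the products of the torus and the positive part. -/
def pBorel : Submodule KK (UqP C J) :=
  Subalgebra.toSubmodule (Pzero C J) * Subalgebra.toSubmodule (Ppos C J)

theorem range_triMul :
    LinearMap.range (triMul C J) = Subalgebra.toSubmodule (Pneg C J) * pBorel C J := by
  have hval (A : Subalgebra KK (UqP C J)) :
      LinearMap.range A.val.toLinearMap = Subalgebra.toSubmodule A :=
    Submodule.range_subtype (Subalgebra.toSubmodule A)
  rw [triMul, range_mul'_comp_map, range_mul'_comp_map, hval, hval, hval, pBorel, mul_assoc]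

variable {C J}

theorem one_mem_pBorel : 1 ∈ pBorel C J :=
  one_mul (1 : UqP C J) ▸ Submodule.mul_mem_mul (one_mem (Pzero C J)) (one_mem (Ppos C J))

theorem pBorel_le_range_triMul : pBorel C J ≤ LinearMap.range (triMul C J) := fun v hv => by
  rw [range_triMul, ← one_mul v]
  exact Submodule.mul_mem_mul (one_mem (Pneg C J)) hv

theorem pT_mul_mem_pBorel (i : I) {v : UqP C J} (hv : v ∈ pBorel C J) : pT C J i * v ∈ pBorel C J :=
  mul_mem_toSubmodule_mul (Algebra.subset_adjoin (.inl ⟨i, rfl⟩)) hv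

theorem pTinv_mul_mem_pBorel (i : I) {v : UqP C J} (hv : v ∈ pBorel C J) :
    pTinv C J i * v ∈ pBorel C J :=
  mul_mem_toSubmodule_mul (Algebra.subset_adjoin (.inr ⟨i, rfl⟩)) hv

theorem pE_mul_mem_pBorel (j : J) {v : UqP C J} (hv : v ∈ pBorel C J) :
    pE C J j * v ∈ pBorel C J := by
  refine mul_mem_toSubmodule_adjoin_mul ?_ (fun y hy => ?_) hv
  · rintro _ (⟨i, rfl⟩ | ⟨i, rfl⟩)
    · exact ⟨_, Subalgebra.smul_mem _ (Algebra.subset_adjoin (.inl ⟨i, rfl⟩)) _, by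
        rw [pE_mul_pT, smul_mul_assoc]⟩
    · exact ⟨_, Subalgebra.smul_mem _ (Algebra.subset_adjoin (.inr ⟨i, rfl⟩)) _, by
        rw [pE_mul_pTinv, smul_mul_assoc]⟩
  · exact (Ppos C J).mul_mem (Algebra.subset_adjoin ⟨j, rfl⟩) hy

theorem pF_mul_mem_range_triMul (i : I) {v : UqP C J} (hv : v ∈ LinearMap.range (triMul C J)) :
    pF C J i * v ∈ LinearMap.range (triMul C J) := by
  rw [range_triMul] at hv ⊢
  exact mul_mem_toSubmodule_mul (Algebra.subset_adjoin ⟨i, rfl⟩) hv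

theorem pT_mul_mem_range_triMul (i : I) {v : UqP C J} (hv : v ∈ LinearMap.range (triMul C J)) :
    pT C J i * v ∈ LinearMap.range (triMul C J) := by
  rw [range_triMul] at hv ⊢
  refine mul_mem_toSubmodule_adjoin_mul (Set.forall_mem_range.2 fun j => ?_)
    (fun _ => pT_mul_mem_pBorel i) hv
  exact ⟨_, Subalgebra.smul_mem _ (Algebra.subset_adjoin (Set.mem_range_self j)) _, by
    rw [pT_mul_pF, smul_mul_assoc]⟩

theorem pTinv_mul_mem_range_triMul (i : I) {v : UqP C J}
    (hv : v ∈ LinearMap.range (triMul C J)) :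
    pTinv C J i * v ∈ LinearMap.range (triMul C J) := by
  rw [range_triMul] at hv ⊢
  refine mul_mem_toSubmodule_adjoin_mul (Set.forall_mem_range.2 fun j => ?_)
    (fun _ => pTinv_mul_mem_pBorel i) hv
  exact ⟨_, Subalgebra.smul_mem _ (Algebra.subset_adjoin (Set.mem_range_self j)) _, by
    rw [pTinv_mul_pF, smul_mul_assoc]⟩

theorem lie_pE_pF_mul_mem_range_triMul (j : J) (i : I) {v : UqP C J}
    (hv : v ∈ LinearMap.range (triMul C J)) :
    ⁅pE C J j, pF C J i⁆ * v ∈ LinearMap.range (triMul C J) := by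
  rw [lie_pE_pF]
  split_ifs
  · rw [smul_mul_assoc, sub_mul]
    exact Submodule.smul_mem _ _
      (sub_mem (pT_mul_mem_range_triMul _ hv) (pTinv_mul_mem_range_triMul _ hv))
  · rw [zero_mul]; exact zero_mem _

theorem pE_mul_mem_range_triMul (j : J) {v : UqP C J} (hv : v ∈ LinearMap.range (triMul C J)) :
    pE C J j * v ∈ LinearMap.range (triMul C J) := by
  rw [range_triMul] at hv
  induction hv using Submodule.mul_induction_on' with
  | mem_mul_mem x hx b hb =>
    let N := LinearMap.range (triMul C J)
    have hF (i : I) (v : UqP C J) (hv : v ∈ N ⊓ N.comap (LinearMap.mulLeft KK (pE C J j))) :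
        pF C J i • v ∈ N ⊓ N.comap (LinearMap.mulLeft KK (pE C J j)) := by
      have h : pE C J j * (pF C J i * v) =
          ⁅pE C J j, pF C J i⁆ * v + pF C J i * (pE C J j * v) := by
        rw [Ring.lie_def, sub_mul, mul_assoc, mul_assoc, sub_add_cancel]
      refine ⟨pF_mul_mem_range_triMul i hv.1, ?_⟩
      change pE C J j * (pF C J i * v) ∈ N
      rw [h]
      exact add_mem (lie_pE_pF_mul_mem_range_triMul j i hv.1) (pF_mul_mem_range_triMul i hv.2)
    exact (smul_mem_of_mem_adjoin (Set.forall_mem_range.2 hF) hx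
      ⟨pBorel_le_range_triMul hb, pBorel_le_range_triMul (pE_mul_mem_pBorel j hb)⟩).2
  | add v _ w _ hv hw => rw [mul_add]; exact add_mem hv hw

theorem triMul_surjective : Function.Surjective (triMul C J) := by
  have h (u : UqP C J) : u • (1 : UqP C J) ∈ LinearMap.range (triMul C J) := by
    refine smul_mem_of_mem_adjoin ?_ (adjoin_generators C J ▸ Algebra.mem_top)
      (pBorel_le_range_triMul one_mem_pBorel)
    rintro _ (((⟨j, rfl⟩ | ⟨i, rfl⟩) | ⟨i, rfl⟩) | ⟨i, rfl⟩) v hv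
    · exact pE_mul_mem_range_triMul j hv
    · exact pF_mul_mem_range_triMul i hv
    · exact pT_mul_mem_range_triMul i hv
    · exact pTinv_mul_mem_range_triMul i hv
  exact fun u => by simpa using h u

end Surjectivity

/-- Triangular decomposition of the parabolic quantum group: the canonical homomorphism
`U_q(𝔭_J) → U_q(𝔤)` (sending generators to generators) is injective, and the
multiplication map induces an isomorphism
`U_q^-(𝔭_J) ⊗ U_q^0(𝔭_J) ⊗ U_q^+(𝔭_J) ≅ U_q(𝔭_J)`. -/
theorem parabolic_triangular_decomposition
    (I : Type) [DecidableEq I] (C : CartanData I) (J : Set I) :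
    (∃ φ : UqP C J →ₐ[KK] Uq C,
        (∀ j : ↥J, φ (pE C J j) = uE C j) ∧
        (∀ i : I, φ (pF C J i) = uF C i) ∧
        (∀ i : I, φ (pT C J i) = uT C i) ∧
        (∀ i : I, φ (pTinv C J i) = uTinv C i) ∧
        Function.Injective φ) ∧
    Function.Bijective (triMul C J) := by
  have hφ : Function.Injective (canonicalHom C J) :=
    .of_comp_right (canonicalHom_triMul_injective C J) triMul_surjective
  exact ⟨⟨canonicalHom C J, canonicalHom_pE C J, canonicalHom_pF C J, canonicalHom_pT C J,
    canonicalHom_pTinv C J, hφ⟩, .of_comp (canonicalHom_triMul_injective C J), triMul_surjective⟩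

end
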